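/- arXiv:1006.1051 — 9 statements merged into one kernel-verified Lean document; each statement's English description precedes it below -/
import Mathlib

section
/- Let X be a d-dimensional real normed space with 0 < δ < 2, and let S be a set of unit vectors in X such that ‖x + y‖ ≤ δ for all distinct x, y ∈ S (a δ-additive set). Then the cardinality of S is at most 2·(2/(2−δ))^d. -/
/-!
Put `r = 1 - δ / 2`. Since `2‖x‖ ≤ ‖x + y‖ + ‖x - y‖`, the balls of radius `r` about the points of
`S` are pairwise disjoint, and since `‖x + y‖ + 2 * r ≤ 2`, the midpoint of two points taken from
different balls lies in the unit ball. If the number of points is even, the Brunn–Minkowski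
inequality for the union of one half of the balls and the union of the other half shows that the
unit ball has at least the volume of half of the balls, which is the claim.

If the number of points is odd, order them by a norming functional `f` of the difference of two of
them and halve the ball about the median point `p` by the hyperplane `f = f p`. The upper half ball
joins the balls below `p`, the lower half ball joins the balls above `p`. Cut the first union at the
level `f p` and the second at the level which leaves the same volume below; Brunn–Minkowski then
applies separately to the two lower and to the two upper parts. The second level is at least `f p`
because `f` separates two points by `2 * r`, so one ball lies entirely on one side of the
hyperplane. Hence two points of the median ball are never paired.

Brunn–Minkowski is used only for midpoints and is proved through the Prékopa–Leindler inequality,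
which passes from `ℝ` to products by Fubini's theorem.
-/

open MeasureTheory Set Module
open scoped ENNReal NNReal Pointwise Topology

theorem volume_add_volume_le_volume_add_of_isCompact {K L : Set ℝ} (hK : IsCompact K)
    (hL : IsCompact L) (hK₀ : K.Nonempty) (hL₀ : L.Nonempty) :
    volume K + volume L ≤ volume (K + L) := by
  obtain ⟨k, hk, k_max⟩ := hK.exists_isGreatest hK₀
  obtain ⟨l, hl, l_min⟩ := hL.exists_isLeast hL₀
  have overlap : (l +ᵥ K) ∩ (k +ᵥ L) ⊆ {k + l} := by
    rintro _ ⟨⟨x, hx, rfl⟩, ⟨y, hy, hxy⟩⟩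
    have hxk : x ≤ k := k_max hx
    have hly : l ≤ y := l_min hy
    simp only [vadd_eq_add, mem_singleton_iff] at hxy ⊢
    linarith
  calc volume K + volume L = volume (l +ᵥ K) + volume (k +ᵥ L) := by simp only [measure_vadd]
    _ = volume ((l +ᵥ K) ∪ (k +ᵥ L)) :=
      (measure_union₀ (hL.vadd k).measurableSet.nullMeasurableSet
        (measure_mono_null overlap (measure_singleton _))).symm
    _ ≤ volume (K + L) := by
      refine measure_mono (union_subset ?_ ?_)
      · rintro _ ⟨x, hx, rfl⟩
        exact ⟨x, hx, l, hl, add_comm x l⟩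
      · rintro _ ⟨y, hy, rfl⟩
        exact add_mem_add hk hy

theorem volume_add_volume_le_volume_add {A B : Set ℝ} (hA : MeasurableSet A)
    (hB : MeasurableSet B) (hA₀ : A.Nonempty) (hB₀ : B.Nonempty) :
    volume A + volume B ≤ volume (A + B) := by
  obtain ⟨a, ha⟩ := hA₀
  obtain ⟨b, hb⟩ := hB₀
  rw [hA.measure_eq_iSup_isCompact, hB.measure_eq_iSup_isCompact]
  simp only [iSup_and']
  refine ENNReal.biSup_add_biSup_le' ⟨∅, empty_subset A, isCompact_empty⟩
    ⟨∅, empty_subset B, isCompact_empty⟩ ?_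
  rintro K ⟨hKA, hK⟩ L ⟨hLB, hL⟩
  calc volume K + volume L ≤ volume (insert a K) + volume (insert b L) := by
        gcongr <;> exact subset_insert _ _
    _ ≤ volume (insert a K + insert b L) :=
      volume_add_volume_le_volume_add_of_isCompact (hK.insert a) (hL.insert b)
        (insert_nonempty a K) (insert_nonempty b L)
    _ ≤ volume (A + B) := by
      gcongr
      · exact insert_subset ha hKA
      · exact insert_subset hb hLB

theorem volume_add_volume_le_two_mul_volume {A B C : Set ℝ} (hA : MeasurableSet A)
    (hB : MeasurableSet B) (hA₀ : A.Nonempty) (hB₀ : B.Nonempty)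
    (hC : ∀ a ∈ A, ∀ b ∈ B, midpoint ℝ a b ∈ C) :
    volume A + volume B ≤ 2 * volume C := by
  have sum_subset : A + B ⊆ (2 : ℝ) • C := by
    rintro _ ⟨a, ha, b, hb, rfl⟩
    refine ⟨midpoint ℝ a b, hC a ha b hb, ?_⟩
    simp [midpoint_eq_smul_add]
  calc volume A + volume B ≤ volume (A + B) := volume_add_volume_le_volume_add hA hB hA₀ hB₀
    _ ≤ volume ((2 : ℝ) • C) := measure_mono sum_subset
    _ = 2 * volume C := by simp [Measure.addHaar_smul]

theorem lintegral_eq_lintegral_measure_ofReal_lt {α : Type*} [MeasurableSpace α] (μ : Measure α)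
    {f : α → ℝ≥0∞} (hf : Measurable f) (hf_top : ∀ x, f x ≠ ∞) :
    ∫⁻ x, f x ∂μ = ∫⁻ t in Ioi 0, μ {x | ENNReal.ofReal t < f x} := by
  calc ∫⁻ x, f x ∂μ = ∫⁻ x, ENNReal.ofReal (f x).toReal ∂μ := by
        simp only [ENNReal.ofReal_toReal (hf_top _)]
    _ = ∫⁻ t in Ioi 0, μ {x | t < (f x).toReal} :=
      lintegral_eq_lintegral_meas_lt μ (.of_forall fun _ => ENNReal.toReal_nonneg)
        hf.ennreal_toReal.aemeasurable
    _ = ∫⁻ t in Ioi 0, μ {x | ENNReal.ofReal t < f x} := by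
      refine setLIntegral_congr_fun measurableSet_Ioi fun t (ht : 0 < t) => ?_
      simp only [ENNReal.ofReal_lt_iff_lt_toReal ht.le (hf_top _)]

theorem lintegral_add_lintegral_le_of_iSup_eq {f g h : ℝ → ℝ≥0∞} (hf : Measurable f)
    (hg : Measurable g) (hh : Measurable h) (h_top : ⨆ x, f x ≠ ∞) (h_sup : ⨆ x, f x = ⨆ x, g x)
    (hfgh : ∀ x y, f x * g y ≤ h (midpoint ℝ x y) ^ 2) :
    (∫⁻ x, f x) + ∫⁻ x, g x ≤ 2 * ∫⁻ x, h x := by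
  set M := ⨆ x, f x
  have f_le : ∀ x, f x ≤ M := le_iSup f
  have g_le : ∀ x, g x ≤ M := fun x => h_sup ▸ le_iSup g x
  have level_le (t : ℝ) : volume {x | ENNReal.ofReal t < f x} +
      volume {x | ENNReal.ofReal t < g x} ≤ 2 * volume {x | ENNReal.ofReal t < min (h x) M} := by
    by_cases ht : ENNReal.ofReal t < M
    · refine volume_add_volume_le_two_mul_volume (measurableSet_lt measurable_const hf)
        (measurableSet_lt measurable_const hg) (lt_iSup_iff.mp ht)
        (lt_iSup_iff.mp (ht.trans_eq h_sup)) fun x hx y hy => lt_min ?_ ht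
      exact lt_of_pow_lt_pow_left' 2
        ((sq (ENNReal.ofReal t) ▸ ENNReal.mul_lt_mul hx hy).trans_le (hfgh x y))
    · simp [((f_le _).trans (not_lt.mp ht)).not_gt, ((g_le _).trans (not_lt.mp ht)).not_gt]
  have level_measurable : Measurable fun t => volume {x | ENNReal.ofReal t < f x} :=
    Antitone.measurable fun s t hst =>
      measure_mono fun x hx => (ENNReal.ofReal_le_ofReal hst).trans_lt hx
  calc (∫⁻ x, f x) + ∫⁻ x, g x
      = ∫⁻ t in Ioi 0, (volume {x | ENNReal.ofReal t < f x} +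
          volume {x | ENNReal.ofReal t < g x}) := by
        rw [lintegral_eq_lintegral_measure_ofReal_lt _ hf (ne_top_of_le_ne_top h_top <| f_le ·),
          lintegral_eq_lintegral_measure_ofReal_lt _ hg (ne_top_of_le_ne_top h_top <| g_le ·),
          lintegral_add_left level_measurable]
    _ ≤ ∫⁻ t in Ioi 0, 2 * volume {x | ENNReal.ofReal t < min (h x) M} := lintegral_mono level_le
    _ = 2 * ∫⁻ x, min (h x) M := by
      rw [lintegral_const_mul' _ _ ENNReal.ofNat_ne_top,
        lintegral_eq_lintegral_measure_ofReal_lt _ (hh.min measurable_const)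
          fun x => ne_top_of_le_ne_top h_top (min_le_right _ _)]
    _ ≤ 2 * ∫⁻ x, h x := by
      gcongr
      exact min_le_left _ _

theorem ennreal_mul_le_sq_of_add_le_two_mul {a b c : ℝ≥0∞} (h : a + b ≤ 2 * c) :
    a * b ≤ c ^ 2 := by
  rcases eq_or_ne c ∞ with rfl | hc
  · simp
  obtain ⟨ha, hb⟩ := ENNReal.add_ne_top.mp
    (ne_top_of_le_ne_top (ENNReal.mul_ne_top ENNReal.ofNat_ne_top hc) h)
  lift a to ℝ≥0 using ha
  lift b to ℝ≥0 using hb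
  lift c to ℝ≥0 using hc
  norm_cast at h ⊢
  have four_mul_le : 4 * (a * b) ≤ 4 * c ^ 2 :=
    calc 4 * (a * b) = 4 * a * b := by ring
      _ ≤ (a + b) ^ 2 := four_mul_le_sq_add a b
      _ ≤ (2 * c) ^ 2 := by gcongr
      _ = 4 * c ^ 2 := by ring
  exact le_of_mul_le_mul_left four_mul_le four_pos

theorem exists_mul_eq_inv_mul {M P : ℝ≥0∞} (hM₀ : M ≠ 0) (hP₀ : P ≠ 0) (hM : M ≠ ∞)
    (hP : P ≠ ∞) : ∃ a : ℝ≥0∞, a ≠ 0 ∧ a ≠ ∞ ∧ a * M = a⁻¹ * P := by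
  lift M to ℝ≥0 using hM
  lift P to ℝ≥0 using hP
  rw [ENNReal.coe_ne_zero] at hM₀ hP₀
  have ratio_ne_zero : NNReal.sqrt (P / M) ≠ 0 := by
    simp [hM₀, hP₀]
  refine ⟨NNReal.sqrt (P / M), by simpa using ratio_ne_zero, ENNReal.coe_ne_top, ?_⟩
  rw [← ENNReal.coe_inv ratio_ne_zero]
  norm_cast
  rw [eq_inv_mul_iff_mul_eq₀ ratio_ne_zero, ← mul_assoc, NNReal.mul_self_sqrt,
    div_mul_cancel₀ _ hM₀]

theorem lintegral_mul_lintegral_le_sq_of_iSup_ne_top {f g h : ℝ → ℝ≥0∞} (hf : Measurable f)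
    (hg : Measurable g) (hh : Measurable h) (hf_top : ⨆ x, f x ≠ ∞) (hg_top : ⨆ x, g x ≠ ∞)
    (hfgh : ∀ x y, f x * g y ≤ h (midpoint ℝ x y) ^ 2) :
    (∫⁻ x, f x) * ∫⁻ x, g x ≤ (∫⁻ x, h x) ^ 2 := by
  rcases eq_or_ne (⨆ x, f x) 0 with hf₀ | hf₀
  · simp [ENNReal.iSup_eq_zero.mp hf₀]
  rcases eq_or_ne (⨆ x, g x) 0 with hg₀ | hg₀
  · simp [ENNReal.iSup_eq_zero.mp hg₀]
  obtain ⟨a, ha₀, ha_top, ha⟩ := exists_mul_eq_inv_mul hf₀ hg₀ hf_top hg_top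
  have cancel (u v : ℝ≥0∞) : (a * u) * (a⁻¹ * v) = u * v := by
    rw [mul_mul_mul_comm, ENNReal.mul_inv_cancel ha₀ ha_top, one_mul]
  have scaled : (∫⁻ x, a * f x) + ∫⁻ x, a⁻¹ * g x ≤ 2 * ∫⁻ x, h x := by
    refine lintegral_add_lintegral_le_of_iSup_eq (hf.const_mul a) (hg.const_mul a⁻¹) hh ?_ ?_ ?_
    · rw [← ENNReal.mul_iSup]
      exact ENNReal.mul_ne_top ha_top hf_top
    · rw [← ENNReal.mul_iSup, ← ENNReal.mul_iSup, ha]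
    · intro x y
      rw [cancel]
      exact hfgh x y
  rw [lintegral_const_mul a hf, lintegral_const_mul a⁻¹ hg] at scaled
  rw [← cancel]
  exact ennreal_mul_le_sq_of_add_le_two_mul scaled

theorem lintegral_eq_iSup_lintegral_min_natCast {α : Type*} [MeasurableSpace α] (μ : Measure α)
    {f : α → ℝ≥0∞} (hf : Measurable f) : ∫⁻ x, f x ∂μ = ⨆ n : ℕ, ∫⁻ x, min (f x) n ∂μ := by
  rw [← lintegral_iSup (fun n => hf.min measurable_const)
    fun m n hmn x => min_le_min_left _ (Nat.cast_le.mpr hmn)]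
  refine lintegral_congr fun x => ?_
  rw [← inf_iSup_eq, ENNReal.iSup_natCast, inf_top_eq]

/-- The midpoint case of the Prékopa–Leindler inequality for `μ`. All the functions take values in
`ℝ≥0∞`, so that no integrability has to be assumed. -/
def IsMidpointLogConcave {E : Type*} [AddCommGroup E] [Module ℝ E] [MeasurableSpace E]
    (μ : Measure E) : Prop :=
  ∀ ⦃f g h : E → ℝ≥0∞⦄, Measurable f → Measurable g → Measurable h →
    (∀ x y, f x * g y ≤ h (midpoint ℝ x y) ^ 2) →
      (∫⁻ x, f x ∂μ) * ∫⁻ x, g x ∂μ ≤ (∫⁻ x, h x ∂μ) ^ 2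

theorem isMidpointLogConcave_volume_real : IsMidpointLogConcave (volume : Measure ℝ) := by
  intro f g h hf hg hh hfgh
  have min_natCast_ne_top (u : ℝ → ℝ≥0∞) (n : ℕ) : ⨆ x, min (u x) n ≠ ∞ :=
    ne_top_of_le_ne_top (ENNReal.natCast_ne_top n) (iSup_le fun x => min_le_right _ _)
  rw [lintegral_eq_iSup_lintegral_min_natCast volume hf,
    lintegral_eq_iSup_lintegral_min_natCast volume hg, ENNReal.iSup_mul]
  refine iSup_le fun m => ?_
  rw [ENNReal.mul_iSup]
  refine iSup_le fun n => ?_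
  refine lintegral_mul_lintegral_le_sq_of_iSup_ne_top (hf.min measurable_const)
    (hg.min measurable_const) hh (min_natCast_ne_top f m) (min_natCast_ne_top g n) fun x y => ?_
  exact (mul_le_mul' (min_le_left _ _) (min_le_left _ _)).trans (hfgh x y)

namespace IsMidpointLogConcave

section Constructions

variable {E F : Type*} [AddCommGroup E] [Module ℝ E] [MeasurableSpace E]
  [AddCommGroup F] [Module ℝ F] [MeasurableSpace F] {μ : Measure E} {ν : Measure F}

theorem dirac (x : E) : IsMidpointLogConcave (Measure.dirac x) := by
  intro f g h hf hg hh hfgh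
  simpa [lintegral_dirac' x, hf, hg, hh] using hfgh x x

theorem smul (hμ : IsMidpointLogConcave μ) (c : ℝ≥0∞) : IsMidpointLogConcave (c • μ) := by
  intro f g h hf hg hh hfgh
  simp only [lintegral_smul_measure, smul_eq_mul]
  rw [mul_mul_mul_comm, ← sq, mul_pow]
  gcongr
  exact hμ hf hg hh hfgh

theorem of_measurePreserving (hμ : IsMidpointLogConcave μ) (e : E →ₗ[ℝ] F)
    (he : MeasurePreserving e μ ν) : IsMidpointLogConcave ν := by
  intro f g h hf hg hh hfgh
  rw [← he.lintegral_comp hf, ← he.lintegral_comp hg, ← he.lintegral_comp hh]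
  refine hμ (hf.comp he.measurable) (hg.comp he.measurable) (hh.comp he.measurable) fun x y => ?_
  rw [show e (midpoint ℝ x y) = midpoint ℝ (e x) (e y) from e.toAffineMap.map_midpoint x y]
  exact hfgh (e x) (e y)

theorem prod [SFinite ν] (hμ : IsMidpointLogConcave μ) (hν : IsMidpointLogConcave ν) :
    IsMidpointLogConcave (μ.prod ν) := by
  intro f g h hf hg hh hfgh
  rw [lintegral_prod _ hf.aemeasurable, lintegral_prod _ hg.aemeasurable,
    lintegral_prod _ hh.aemeasurable]
  refine hμ hf.lintegral_prod_right' hg.lintegral_prod_right' hh.lintegral_prod_right'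
    fun x₁ x₂ => ?_
  refine hν (hf.comp measurable_prodMk_left) (hg.comp measurable_prodMk_left)
    (hh.comp measurable_prodMk_left) fun y₁ y₂ => ?_
  have midpoint_mk : midpoint ℝ (x₁, y₁) (x₂, y₂) = (midpoint ℝ x₁ x₂, midpoint ℝ y₁ y₂) := by
    simp [midpoint_eq_smul_add]
  simpa [midpoint_mk] using hfgh (x₁, y₁) (x₂, y₂)

end Constructions

theorem volume_pi (n : ℕ) : IsMidpointLogConcave (volume : Measure (Fin n → ℝ)) := by
  induction n with
  | zero => exact Measure.volume_pi_eq_dirac (0 : Fin 0 → ℝ) ▸ dirac 0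
  | succ n ih =>
    let e := MeasurableEquiv.piFinSuccAbove (fun _ : Fin (n + 1) => ℝ) 0
    have cons_eq : ⇑(Fin.consLinearEquiv ℝ fun _ : Fin (n + 1) => ℝ).toLinearMap = e.symm :=
      funext fun p => (Fin.insertNth_zero' p.1 p.2).symm
    have e_symm_measurePreserving : MeasurePreserving e.symm volume volume :=
      (volume_preserving_piFinSuccAbove (fun _ : Fin (n + 1) => ℝ) 0).symm
    exact (isMidpointLogConcave_volume_real.prod ih).of_measurePreserving _
      (cons_eq ▸ e_symm_measurePreserving)

theorem of_isAddHaarMeasure {X : Type*} [NormedAddCommGroup X] [NormedSpace ℝ X]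
    [FiniteDimensional ℝ X] [MeasurableSpace X] [BorelSpace X] (μ : Measure X)
    [μ.IsAddHaarMeasure] : IsMidpointLogConcave μ := by
  let e : (Fin (finrank ℝ X) → ℝ) ≃L[ℝ] X := ContinuousLinearEquiv.ofFinrankEq (by simp)
  have he : IsMidpointLogConcave (volume.map e) :=
    (volume_pi _).of_measurePreserving e.toLinearEquiv.toLinearMap
      (e.continuous.measurable.measurePreserving volume)
  rw [Measure.isAddLeftInvariant_eq_smul μ (volume.map e)]
  exact he.smul _

section Sets

variable {E : Type*} [AddCommGroup E] [Module ℝ E] [MeasurableSpace E] {μ : Measure E}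
  {A B C : Set E}

theorem measure_mul_measure_le_sq (hμ : IsMidpointLogConcave μ) (hA : MeasurableSet A)
    (hB : MeasurableSet B) (hC : MeasurableSet C)
    (hABC : ∀ a ∈ A, ∀ b ∈ B, midpoint ℝ a b ∈ C) : μ A * μ B ≤ μ C ^ 2 := by
  rw [← lintegral_indicator_one hA, ← lintegral_indicator_one hB, ← lintegral_indicator_one hC]
  refine hμ (measurable_one.indicator hA) (measurable_one.indicator hB)
    (measurable_one.indicator hC) fun x y => ?_
  by_cases hx : x ∈ A
  · by_cases hy : y ∈ B
    · simp [hx, hy, hABC x hx y hy]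
    · simp [hy]
  · simp [hx]

theorem le_measure (hμ : IsMidpointLogConcave μ) (hA : MeasurableSet A) (hB : MeasurableSet B)
    (hC : MeasurableSet C) (hABC : ∀ a ∈ A, ∀ b ∈ B, midpoint ℝ a b ∈ C) {m : ℝ≥0∞}
    (hmA : m ≤ μ A) (hmB : m ≤ μ B) : m ≤ μ C := by
  refine (ENNReal.pow_le_pow_left_iff two_ne_zero).mp ?_
  calc m ^ 2 = m * m := sq m
    _ ≤ μ A * μ B := by gcongr
    _ ≤ μ C ^ 2 := hμ.measure_mul_measure_le_sq hA hB hC hABC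

end Sets

end IsMidpointLogConcave

section Cuts

variable {α : Type*} [MeasurableSpace α] {μ : Measure α} {f : α → ℝ} {V : Set α}

theorem continuous_measure_inter_lt (hf : Measurable f) (hnull : ∀ t, μ {x | f x = t} = 0)
    (hV : MeasurableSet V) (hV_top : μ V ≠ ∞) : Continuous fun t => μ (V ∩ {x | f x < t}) := by
  refine continuous_iff_continuousAt.mpr fun t => ?_
  refine tendsto_measure_of_ae_tendsto_indicator (𝓝 t)
    (hV.inter (measurableSet_lt hf measurable_const))
    (fun t => hV.inter (measurableSet_lt hf measurable_const)) hV hV_top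
    (.of_forall fun _ => inter_subset_left) ?_
  have ae_ne : ∀ᵐ x ∂μ, f x ≠ t := by simpa [ae_iff] using hnull t
  filter_upwards [ae_ne] with x hx
  rcases hx.lt_or_gt with hlt | hgt
  · filter_upwards [lt_mem_nhds hlt] with u hu
    simp [hlt, hu]
  · filter_upwards [gt_mem_nhds hgt] with u hu
    simp [hgt.not_gt, hu.not_gt]

theorem exists_ge_measure_inter_lt_eq (hf : Measurable f) (hnull : ∀ t, μ {x | f x = t} = 0)
    (hV : MeasurableSet V) (hV_top : μ V ≠ ∞) (hV_bdd : BddAbove (f '' V)) {c : ℝ} {m : ℝ≥0∞}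
    (hcm : μ (V ∩ {x | f x < c}) ≤ m) (hmV : m ≤ μ V) :
    ∃ b, c ≤ b ∧ μ (V ∩ {x | f x < b}) = m := by
  obtain ⟨M, hM⟩ := hV_bdd
  have V_subset : V ⊆ {x | f x < max c (M + 1)} := fun x hx =>
    (hM (mem_image_of_mem f hx)).trans_lt ((lt_add_one M).trans_le (le_max_right _ _))
  obtain ⟨b, hb, rfl⟩ := intermediate_value_Icc (le_max_left c (M + 1))
    (continuous_measure_inter_lt hf hnull hV hV_top).continuousOn
    ⟨hcm, hmV.trans_eq (by rw [inter_eq_left.mpr V_subset])⟩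
  exact ⟨b, hb.1, rfl⟩

end Cuts

section CutComparison

variable {E : Type*} [AddCommGroup E] [Module ℝ E] [MeasurableSpace E] {μ : Measure E}
  {f : E →ₗ[ℝ] ℝ} {U V C : Set E} {b c : ℝ}

theorem IsMidpointLogConcave.measure_le_of_measure_cut_eq (hμ : IsMidpointLogConcave μ)
    (hf : Measurable f) (hU : MeasurableSet U) (hV : MeasurableSet V) (hC : MeasurableSet C)
    (hlower : μ (U ∩ {x | f x < c}) = μ (V ∩ {x | f x < b}))
    (hupper : μ (U \ {x | f x < c}) = μ (V \ {x | f x < b}))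
    (hlower_mid : ∀ x ∈ U, ∀ y ∈ V, f x < c → f y < b → midpoint ℝ x y ∈ C)
    (hupper_mid : ∀ x ∈ U, ∀ y ∈ V, c ≤ f x → b ≤ f y → midpoint ℝ x y ∈ C) : μ U ≤ μ C := by
  have measurable_lt (t : ℝ) : MeasurableSet {x | f x < t} := measurableSet_lt hf measurable_const
  have f_midpoint (x y : E) : f (midpoint ℝ x y) = midpoint ℝ (f x) (f y) :=
    f.toAffineMap.map_midpoint x y
  have lower_le : μ (U ∩ {x | f x < c}) ≤ μ (C ∩ {x | f x < midpoint ℝ c b}) := by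
    refine hμ.le_measure (hU.inter (measurable_lt c)) (hV.inter (measurable_lt b))
      (hC.inter (measurable_lt _)) ?_ le_rfl hlower.le
    rintro x ⟨hxU, hx : f x < c⟩ y ⟨hyV, hy : f y < b⟩
    refine ⟨hlower_mid x hxU y hyV hx hy, ?_⟩
    rw [mem_ofPred_eq, f_midpoint]
    exact lineMap_strict_mono_endpoints hx hy (invOf_nonneg.2 zero_le_two)
      (invOf_le_one one_le_two)
  have upper_le : μ (U \ {x | f x < c}) ≤ μ (C \ {x | f x < midpoint ℝ c b}) := by
    refine hμ.le_measure (hU.diff (measurable_lt c)) (hV.diff (measurable_lt b))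
      (hC.diff (measurable_lt _)) ?_ le_rfl hupper.le
    rintro x ⟨hxU, hx : ¬ f x < c⟩ y ⟨hyV, hy : ¬ f y < b⟩
    rw [not_lt] at hx hy
    refine ⟨hupper_mid x hxU y hyV hx hy, ?_⟩
    rw [mem_ofPred_eq, f_midpoint, not_lt]
    exact midpoint_le_midpoint hx hy
  calc μ U = μ (U ∩ {x | f x < c}) + μ (U \ {x | f x < c}) :=
        (measure_inter_add_sdiff U (measurable_lt c)).symm
    _ ≤ μ (C ∩ {x | f x < midpoint ℝ c b}) + μ (C \ {x | f x < midpoint ℝ c b}) :=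
      add_le_add lower_le upper_le
    _ = μ C := measure_inter_add_sdiff C (measurable_lt _)

theorem IsMidpointLogConcave.measure_le_of_measure_inter_lt_le (hμ : IsMidpointLogConcave μ)
    (hf : Measurable f) (hnull : ∀ t, μ {x | f x = t} = 0) (hU : MeasurableSet U)
    (hV : MeasurableSet V) (hC : MeasurableSet C) (hV_top : μ V ≠ ∞)
    (hV_bdd : BddAbove (f '' V)) (hUV : μ U = μ V)
    (hlower : μ (V ∩ {x | f x < c}) ≤ μ (U ∩ {x | f x < c}))
    (hmid : ∀ x ∈ U, ∀ y ∈ V, f x < c ∨ c ≤ f y → midpoint ℝ x y ∈ C) : μ U ≤ μ C := by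
  have measurable_lt (t : ℝ) : MeasurableSet {x | f x < t} := measurableSet_lt hf measurable_const
  obtain ⟨b, hcb, hb⟩ := exists_ge_measure_inter_lt_eq hf hnull hV hV_top hV_bdd hlower
    ((measure_mono inter_subset_left).trans_eq hUV)
  have upper_eq : μ (U \ {x | f x < c}) = μ (V \ {x | f x < b}) := by
    have lower_ne_top : μ (U ∩ {x | f x < c}) ≠ ∞ :=
      ne_top_of_le_ne_top hV_top (hb ▸ measure_mono inter_subset_left)
    rw [← ENNReal.add_right_inj lower_ne_top, measure_inter_add_sdiff _ (measurable_lt c), ← hb,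
      measure_inter_add_sdiff _ (measurable_lt b), hUV]
  exact hμ.measure_le_of_measure_cut_eq hf hU hV hC hb.symm upper_eq
    (fun x hx y hy hxc _ => hmid x hx y hy (.inl hxc))
    (fun x hx y hy _ hby => hmid x hx y hy (.inr (hcb.trans hby)))

end CutComparison

section HalfBalls

variable {X : Type*} [NormedAddCommGroup X] [NormedSpace ℝ X] [FiniteDimensional ℝ X]
  [MeasurableSpace X] [BorelSpace X] (μ : Measure X) [μ.IsAddHaarMeasure] {f : StrongDual ℝ X}

theorem addHaar_setOf_eq_zero (hf : f ≠ 0) (t : ℝ) : μ {u | f u = t} = 0 := by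
  rcases eq_empty_or_nonempty {u | f u = t} with hempty | ⟨z, rfl⟩
  · simp [hempty]
  have translate : {u | f u = f z} = (fun u => u + -z) ⁻¹' (f.ker : Set X) := by
    ext u
    simp [← sub_eq_add_neg, sub_eq_zero]
  rw [translate, measure_preimage_add_right]
  refine Measure.addHaar_submodule μ _ fun hker => hf ?_
  ext u
  exact (hker ▸ Submodule.mem_top : u ∈ f.ker)

theorem addHaar_ball_inter_gt_eq_addHaar_ball_inter_lt (x : X) (r : ℝ) :
    μ (Metric.ball x r ∩ {u | f x < f u}) = μ (Metric.ball x r ∩ {u | f u < f x}) := by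
  have reflect : (fun u => x + x - u) ⁻¹' (Metric.ball x r ∩ {u | f u < f x}) =
      Metric.ball x r ∩ {u | f x < f u} := by
    ext u
    have norm_reflect : ‖x + x - u - x‖ = ‖u - x‖ := by
      rw [← norm_neg]
      congr 1
      abel
    have f_reflect : f (x + x - u) < f x ↔ f x < f u := by
      rw [map_sub, map_add]
      constructor <;> intro h <;> linarith
    simp only [mem_preimage, mem_inter_iff, Metric.mem_ball, dist_eq_norm, norm_reflect,
      mem_ofPred_eq, f_reflect]
  rw [← reflect]
  exact (Measure.measurePreserving_sub_left μ (x + x)).measure_preimage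
    (measurableSet_ball.inter
      (measurableSet_lt f.continuous.measurable measurable_const)).nullMeasurableSet

theorem addHaar_ball_inter_le_eq_addHaar_ball_inter_lt (hf : f ≠ 0) (x : X) (r : ℝ) :
    μ (Metric.ball x r ∩ {u | f x ≤ f u}) = μ (Metric.ball x r ∩ {u | f u < f x}) := by
  rw [← addHaar_ball_inter_gt_eq_addHaar_ball_inter_lt]
  have ae_ne : ∀ᵐ u ∂μ, f u ≠ f x := by simpa [ae_iff] using addHaar_setOf_eq_zero μ hf (f x)
  refine measure_congr ?_
  filter_upwards [ae_ne] with u hu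
  exact congrArg (u ∈ Metric.ball x r ∧ ·) (propext hu.symm.le_iff_lt)

theorem addHaar_ball_inter_lt (hf : f ≠ 0) (x : X) (r : ℝ) :
    μ (Metric.ball x r ∩ {u | f u < f x}) = μ (Metric.ball x r) / 2 := by
  rw [ENNReal.eq_div_iff two_ne_zero ENNReal.ofNat_ne_top, two_mul]
  nth_rw 2 [← addHaar_ball_inter_le_eq_addHaar_ball_inter_lt μ hf]
  have measurable_lt : MeasurableSet {u | f u < f x} :=
    measurableSet_lt f.continuous.measurable measurable_const
  rw [← measure_inter_add_sdiff (Metric.ball x r) measurable_lt, sdiff_eq]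
  simp only [compl_ofPred, not_lt]

theorem addHaar_ball_inter_le (hf : f ≠ 0) (x : X) (r : ℝ) :
    μ (Metric.ball x r ∩ {u | f x ≤ f u}) = μ (Metric.ball x r) / 2 := by
  rw [addHaar_ball_inter_le_eq_addHaar_ball_inter_lt μ hf, addHaar_ball_inter_lt μ hf]

end HalfBalls

theorem exists_subset_card_eq_forall_le {α β : Type*} [LinearOrder β] (f : α → β) {s : Finset α}
    {k : ℕ} (hk : k ≤ s.card) :
    ∃ t ⊆ s, t.card = k ∧ ∀ a ∈ t, ∀ b ∈ s, b ∉ t → f a ≤ f b := by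
  classical
  induction k with
  | zero => exact ⟨∅, s.empty_subset, rfl, by simp⟩
  | succ k ih =>
    obtain ⟨t, hts, ht_card, ht_le⟩ := ih (by lia)
    have rest_nonempty : (s \ t).Nonempty := by
      rw [← Finset.card_pos, Finset.card_sdiff_of_subset hts]
      lia
    obtain ⟨p, hp, p_min⟩ := (s \ t).exists_min_image f rest_nonempty
    obtain ⟨hps, hpt⟩ := Finset.mem_sdiff.mp hp
    refine ⟨insert p t, Finset.insert_subset hps hts, by simp [hpt, ht_card], ?_⟩
    intro a ha b hbs hb
    obtain ⟨-, hbt⟩ : b ≠ p ∧ b ∉ t := by simpa using hb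
    rcases Finset.mem_insert.mp ha with rfl | hat
    · exact p_min b (Finset.mem_sdiff.mpr ⟨hbs, hbt⟩)
    · exact ht_le a hat b hbs hbt

theorem exists_median {α β : Type*} [DecidableEq α] [LinearOrder β] (f : α → β) {s : Finset α}
    {k : ℕ} (hs : s.card = 2 * k + 1) :
    ∃ L T : Finset α, ∃ p, p ∉ L ∧ p ∉ T ∧ Disjoint L T ∧ s = insert p (L ∪ T) ∧
      L.card = k ∧ T.card = k ∧ (∀ x ∈ L, f x ≤ f p) ∧ ∀ y ∈ T, f p ≤ f y := by
  obtain ⟨L, hLs, hL_card, hL_le⟩ :=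
    exists_subset_card_eq_forall_le f (show k ≤ s.card by lia)
  have rest_card : (s \ L).card = k + 1 := by
    rw [Finset.card_sdiff_of_subset hLs]
    lia
  obtain ⟨p, hp, p_min⟩ := (s \ L).exists_min_image f (Finset.card_pos.mp (by lia))
  obtain ⟨hps, hpL⟩ := Finset.mem_sdiff.mp hp
  refine ⟨L, (s \ L).erase p, p, hpL, Finset.notMem_erase p _,
    Finset.disjoint_sdiff.mono_right (Finset.erase_subset p _), ?_, hL_card,
    by rw [Finset.card_erase_of_mem hp, rest_card, Nat.add_sub_cancel],
    fun x hx => hL_le x hx p hps hpL, fun y hy => p_min y (Finset.mem_of_mem_erase hy)⟩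
  rw [← Finset.union_insert, Finset.insert_erase hp, Finset.union_sdiff_of_subset hLs]

theorem sum_add_le_sum_of_card_eq {ι M : Type*} [AddCommMonoid M] [PartialOrder M]
    [IsOrderedAddMonoid M] {s t : Finset ι} {g : ι → M} {h : M} (hcard : s.card = t.card)
    (hs : ∀ i ∈ s, g i ≤ h) (ht : ∀ i ∈ t, h ≤ g i)
    (hst : (∃ i ∈ s, g i ≤ 0) ∨ ∃ j ∈ t, h + h ≤ g j) : ∑ i ∈ s, g i + h ≤ ∑ i ∈ t, g i := by
  classical
  rcases hst with ⟨i, hi, hgi⟩ | ⟨j, hj, hgj⟩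
  · calc ∑ i ∈ s, g i + h = g i + ∑ i ∈ s.erase i, g i + h := by rw [Finset.add_sum_erase s g hi]
      _ ≤ 0 + (s.erase i).card • h + h := by
        gcongr
        exact Finset.sum_le_card_nsmul _ _ _ fun j hj => hs j (Finset.mem_of_mem_erase hj)
      _ = t.card • h := by
        rw [zero_add, ← succ_nsmul, Finset.card_erase_add_one hi, hcard]
      _ ≤ ∑ i ∈ t, g i := Finset.card_nsmul_le_sum _ _ _ ht
  · calc ∑ i ∈ s, g i + h ≤ s.card • h + h := by
          gcongr
          exact Finset.sum_le_card_nsmul _ _ _ hs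
      _ = h + h + (t.erase j).card • h := by
        rw [hcard, ← Finset.card_erase_add_one hj, succ_nsmul, add_assoc, add_comm]
      _ ≤ g j + ∑ i ∈ t.erase j, g i := by
        gcongr
        exact Finset.card_nsmul_le_sum _ _ _ fun i hi => ht i (Finset.mem_of_mem_erase hi)
      _ = ∑ i ∈ t, g i := Finset.add_sum_erase t g hj

theorem sum_addHaar_ball_inter_lt_add_half_le {X : Type*} [NormedAddCommGroup X] [NormedSpace ℝ X]
    [FiniteDimensional ℝ X] [MeasurableSpace X] [BorelSpace X] (μ : Measure X)
    [μ.IsAddHaarMeasure] {f : StrongDual ℝ X} (hf : f ≠ 0) (hf_norm : ‖f‖ ≤ 1) {L T : Finset X}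
    {r c : ℝ} (hcard : T.card = L.card) (hL : ∀ x ∈ L, f x ≤ c) (hT : ∀ y ∈ T, c ≤ f y)
    (hfar : (∃ y ∈ T, c + r ≤ f y) ∨ ∃ x ∈ L, f x + r ≤ c) :
    ∑ y ∈ T, μ (Metric.ball y r ∩ {u | f u < c}) + μ (Metric.ball 0 r) / 2 ≤
      ∑ x ∈ L, μ (Metric.ball x r ∩ {u | f u < c}) := by
  have f_sub_lt {u v : X} (h : dist u v < r) : f u - f v < r := by
    rw [← map_sub]
    exact ((le_abs_self _).trans (f.le_of_opNorm_le hf_norm _)).trans_lt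
      (by rwa [one_mul, ← dist_eq_norm])
  refine sum_add_le_sum_of_card_eq hcard (fun y hy => ?_) (fun x hx => ?_) (hfar.imp ?_ ?_)
  · rw [← Measure.addHaar_ball_center μ y, ← addHaar_ball_inter_lt μ hf]
    exact measure_mono (inter_subset_inter_right _ fun u hu => lt_of_lt_of_le hu (hT y hy))
  · rw [← Measure.addHaar_ball_center μ x, ← addHaar_ball_inter_lt μ hf]
    exact measure_mono (inter_subset_inter_right _ fun u hu => lt_of_lt_of_le hu (hL x hx))
  · rintro ⟨y, hy, hcy⟩
    refine ⟨y, hy, (measure_mono_null ?_ measure_empty).le⟩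
    rintro u ⟨huy, hu : f u < c⟩
    linarith [f_sub_lt (Metric.mem_ball'.mp huy)]
  · rintro ⟨x, hx, hxc⟩
    refine ⟨x, hx, ?_⟩
    rw [ENNReal.add_halves, ← Measure.addHaar_ball_center μ x]
    refine measure_mono fun u hu => ⟨hu, ?_⟩
    rw [mem_ofPred_eq]
    linarith [f_sub_lt (Metric.mem_ball.mp hu)]

/-- The union of the balls of radius `r` about the points of `s` and of the part of the ball about
`p` that lies in `K`; with `K` a half-space through `p` it adds half a ball to `s.card` balls. -/
def ballsWithPart {X : Type*} [PseudoMetricSpace X] (s : Finset X) (p : X) (r : ℝ) (K : Set X) :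
    Set X :=
  (⋃ x ∈ s, Metric.ball x r) ∪ Metric.ball p r ∩ K

section BallsWithPart

variable {X : Type*} [PseudoMetricSpace X] {s : Finset X} {p : X} {r : ℝ} {K H : Set X}

theorem isBounded_ballsWithPart : Bornology.IsBounded (ballsWithPart s p r K) :=
  ((Bornology.isBounded_biUnion_finset s).mpr fun _ _ => Metric.isBounded_ball).union
    (Metric.isBounded_ball.subset inter_subset_left)

variable [MeasurableSpace X] [OpensMeasurableSpace X]

theorem measurableSet_ballsWithPart (hK : MeasurableSet K) :
    MeasurableSet (ballsWithPart s p r K) :=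
  (s.measurableSet_biUnion fun _ _ => measurableSet_ball).union (measurableSet_ball.inter hK)

theorem measure_ballsWithPart_inter (μ : Measure X) (hp : p ∉ s)
    (hdisj : (insert p (s : Set X)).PairwiseDisjoint (Metric.ball · r)) (hK : MeasurableSet K)
    (hH : MeasurableSet H) :
    μ (ballsWithPart s p r K ∩ H) =
      ∑ x ∈ s, μ (Metric.ball x r ∩ H) + μ (Metric.ball p r ∩ K ∩ H) := by
  have disjoint_p : Disjoint (⋃ x ∈ s, Metric.ball x r) (Metric.ball p r) := by
    rw [disjoint_iUnion₂_left]
    exact fun x hx => hdisj (mem_insert_of_mem p hx) (mem_insert p _) fun h => hp (h ▸ hx)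
  rw [ballsWithPart, union_inter_distrib_right,
    measure_union (disjoint_p.mono inter_subset_left (inter_subset_left.trans inter_subset_left))
      ((measurableSet_ball.inter hK).inter hH), iUnion₂_inter, measure_biUnion_finset]
  · exact fun x hx y hy hxy => (hdisj (mem_insert_of_mem p hx) (mem_insert_of_mem p hy) hxy).mono
      inter_subset_left inter_subset_left
  · exact fun x _ => measurableSet_ball.inter hH

end BallsWithPart

theorem addHaar_ballsWithPart_of_half {X : Type*} [NormedAddCommGroup X] [MeasurableSpace X]
    [BorelSpace X] (μ : Measure X) [μ.IsAddHaarMeasure] {s : Finset X} {p : X} {r : ℝ} {K : Set X}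
    (hp : p ∉ s) (hdisj : (insert p (s : Set X)).PairwiseDisjoint (Metric.ball · r))
    (hK : MeasurableSet K) (hhalf : μ (Metric.ball p r ∩ K) = μ (Metric.ball p r) / 2) :
    μ (ballsWithPart s p r K) = s.card * μ (Metric.ball 0 r) + μ (Metric.ball 0 r) / 2 := by
  simpa [hhalf, Measure.addHaar_ball_center] using
    measure_ballsWithPart_inter μ hp hdisj hK .univ

/-- Disjoint balls of a common radius `r` about the points of `s` such that `C` contains the
midpoint of any two points taken from different balls. Disjointness is expressed by separation of
the centres. -/
structure IsMidpointPacking {X : Type*} [NormedAddCommGroup X] [NormedSpace ℝ X] (s : Set X)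
    (r : ℝ) (C : Set X) : Prop where
  two_mul_le_dist : s.Pairwise fun x y => 2 * r ≤ dist x y
  midpoint_mem : s.Pairwise fun x y =>
    ∀ a ∈ Metric.ball x r, ∀ b ∈ Metric.ball y r, midpoint ℝ a b ∈ C

namespace IsMidpointPacking

section Basic

variable {X : Type*} [NormedAddCommGroup X] [NormedSpace ℝ X] {r : ℝ} {C : Set X}

theorem pairwiseDisjoint {s : Set X} (h : IsMidpointPacking s r C) :
    s.PairwiseDisjoint (Metric.ball · r) := fun _ hx _ hy hxy =>
  Metric.ball_disjoint_ball ((two_mul r).ge.trans (h.two_mul_le_dist hx hy hxy))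

theorem midpoint_mem_of_mem_ballsWithPart {L T : Finset X} {p : X} {K K' : Set X}
    (h : IsMidpointPacking (insert p (L ∪ T : Set X)) r C) (hpL : p ∉ L) (hpT : p ∉ T)
    (hLT : Disjoint L T) {a b : X} (ha : a ∈ ballsWithPart L p r K)
    (hb : b ∈ ballsWithPart T p r K') (hab : a ∉ K ∨ b ∉ K') : midpoint ℝ a b ∈ C := by
  have hL {x : X} (hx : x ∈ L) : x ∈ insert p (L ∪ T : Set X) := .inr (.inl hx)
  have hT {y : X} (hy : y ∈ T) : y ∈ insert p (L ∪ T : Set X) := .inr (.inr hy)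
  simp only [ballsWithPart, mem_union, mem_iUnion₂, exists_prop] at ha hb
  rcases ha with ⟨x, hx, hax⟩ | ⟨hap, haK⟩ <;> rcases hb with ⟨y, hy, hby⟩ | ⟨hbp, hbK⟩
  · exact h.midpoint_mem (hL hx) (hT hy) (Finset.disjoint_iff_ne.mp hLT x hx y hy) a hax b hby
  · exact h.midpoint_mem (hL hx) (mem_insert p _) (ne_of_mem_of_not_mem hx hpL) a hax b hbp
  · exact h.midpoint_mem (mem_insert p _) (hT hy) (ne_of_mem_of_not_mem hy hpT).symm a hap b hby
  · exact absurd hab (not_or.mpr ⟨not_not.mpr haK, not_not.mpr hbK⟩)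

end Basic

section Measure

variable {X : Type*} [NormedAddCommGroup X] [NormedSpace ℝ X] [FiniteDimensional ℝ X]
  [MeasurableSpace X] [BorelSpace X] (μ : Measure X) [μ.IsAddHaarMeasure]
  {s L T : Finset X} {p : X} {r : ℝ} {C : Set X} {f : StrongDual ℝ X}

theorem card_mul_addHaar_ball_le_of_even (h : IsMidpointPacking (s : Set X) r C)
    (hC : MeasurableSet C) (hs : Even s.card) : s.card * μ (Metric.ball 0 r) ≤ 2 * μ C := by
  classical
  obtain ⟨k, hk⟩ := hs
  obtain ⟨L, hLs, hL⟩ := Finset.exists_subset_card_eq (show k ≤ s.card by lia)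
  have hT : (s \ L).card = k := by
    rw [Finset.card_sdiff_of_subset hLs]
    lia
  have measure_union_balls (t : Finset X) (ht : t ⊆ s) (ht_card : t.card = k) :
      μ (⋃ x ∈ t, Metric.ball x r) = k * μ (Metric.ball 0 r) := by
    rw [measure_biUnion_finset (h.pairwiseDisjoint.subset ht) fun _ _ => measurableSet_ball]
    simp [Measure.addHaar_ball_center, ht_card]
  have measurable_union (t : Finset X) : MeasurableSet (⋃ x ∈ t, Metric.ball x r) :=
    (isOpen_biUnion fun _ _ => Metric.isOpen_ball).measurableSet
  have half_le : k * μ (Metric.ball 0 r) ≤ μ C := by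
    refine (IsMidpointLogConcave.of_isAddHaarMeasure μ).le_measure (measurable_union L)
      (measurable_union (s \ L)) hC ?_ (measure_union_balls L hLs hL).ge
      (measure_union_balls (s \ L) Finset.sdiff_subset hT).ge
    intro a ha b hb
    obtain ⟨x, hx, hax⟩ := mem_iUnion₂.mp ha
    obtain ⟨y, hy, hby⟩ := mem_iUnion₂.mp hb
    obtain ⟨hys, hyL⟩ := Finset.mem_sdiff.mp hy
    exact h.midpoint_mem (hLs hx) hys (fun hxy => hyL (hxy ▸ hx)) a hax b hby
  calc s.card * μ (Metric.ball 0 r) = 2 * (k * μ (Metric.ball 0 r)) := by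
        rw [hk, Nat.cast_add, ← two_mul, mul_assoc]
    _ ≤ 2 * μ C := by gcongr

-- The half of the median ball above the hyperplane joins the balls below it, and conversely; the
-- matching cuts then never pair two points of the median ball, whose midpoint may lie outside `C`.
theorem card_mul_add_half_le_of_median (h : IsMidpointPacking (insert p (L ∪ T : Set X)) r C)
    (hC : MeasurableSet C) (hf : f ≠ 0) (hf_norm : ‖f‖ ≤ 1) (hpL : p ∉ L) (hpT : p ∉ T)
    (hLT : Disjoint L T) (hcard : T.card = L.card) (hL : ∀ x ∈ L, f x ≤ f p)
    (hT : ∀ y ∈ T, f p ≤ f y) (hfar : (∃ y ∈ T, f p + r ≤ f y) ∨ ∃ x ∈ L, f x + r ≤ f p) :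
    L.card * μ (Metric.ball 0 r) + μ (Metric.ball 0 r) / 2 ≤ μ C := by
  have measurable_lt : MeasurableSet {u | f u < f p} :=
    measurableSet_lt f.continuous.measurable measurable_const
  have measurable_le : MeasurableSet {u | f p ≤ f u} :=
    measurableSet_le measurable_const f.continuous.measurable
  have disjoint_L : (insert p (L : Set X)).PairwiseDisjoint (Metric.ball · r) :=
    h.pairwiseDisjoint.subset (insert_subset_insert subset_union_left)
  have disjoint_T : (insert p (T : Set X)).PairwiseDisjoint (Metric.ball · r) :=
    h.pairwiseDisjoint.subset (insert_subset_insert subset_union_right)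
  have measure_L := addHaar_ballsWithPart_of_half μ hpL disjoint_L measurable_le
    (addHaar_ball_inter_le μ hf p r)
  have measure_T := addHaar_ballsWithPart_of_half μ hpT disjoint_T measurable_lt
    (addHaar_ball_inter_lt μ hf p r)
  have lower_le : μ (ballsWithPart T p r {u | f u < f p} ∩ {u | f u < f p}) ≤
      μ (ballsWithPart L p r {u | f p ≤ f u} ∩ {u | f u < f p}) := by
    rw [measure_ballsWithPart_inter μ hpT disjoint_T measurable_lt measurable_lt,
      measure_ballsWithPart_inter μ hpL disjoint_L measurable_le measurable_lt, inter_assoc,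
      inter_self, addHaar_ball_inter_lt μ hf, Measure.addHaar_ball_center]
    exact (sum_addHaar_ball_inter_lt_add_half_le μ hf hf_norm hcard hL hT hfar).trans le_self_add
  rw [← measure_L]
  refine (IsMidpointLogConcave.of_isAddHaarMeasure μ).measure_le_of_measure_inter_lt_le
    (f := f.toLinearMap) f.continuous.measurable (addHaar_setOf_eq_zero μ hf)
    (measurableSet_ballsWithPart measurable_le) (measurableSet_ballsWithPart measurable_lt) hC
    isBounded_ballsWithPart.measure_lt_top.ne
    (f.lipschitz.isBounded_image isBounded_ballsWithPart).bddAbove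
    (by rw [measure_L, measure_T, hcard]) lower_le fun a ha b hb hab => ?_
  exact h.midpoint_mem_of_mem_ballsWithPart hpL hpT hLT ha hb
    (hab.imp (fun hap => not_le.mpr hap) fun hpb => not_lt.mpr hpb)

theorem card_mul_addHaar_ball_le_of_odd (h : IsMidpointPacking (s : Set X) r C)
    (hC : MeasurableSet C) (hr : 0 < r) (hs : Odd s.card) (hs_one : 1 < s.card) :
    s.card * μ (Metric.ball 0 r) ≤ 2 * μ C := by
  classical
  obtain ⟨k, hk⟩ := hs
  obtain ⟨y, hy, x, hx, hyx⟩ := Finset.one_lt_card.mp hs_one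
  obtain ⟨f, hf_norm, hf⟩ := exists_dual_vector ℝ (y - x) (norm_sub_eq_zero_iff.not.mpr hyx)
  have two_mul_le_sub : 2 * r ≤ f y - f x := by
    rw [← map_sub, hf, ← dist_eq_norm]
    exact h.two_mul_le_dist hy hx hyx
  have f_ne_zero : f ≠ 0 := norm_ne_zero_iff.mp (hf_norm ▸ one_ne_zero)
  obtain ⟨L, T, p, hpL, hpT, hLT, rfl, hL_card, hT_card, hL, hT⟩ := exists_median f hk
  have far : (∃ y ∈ T, f p + r ≤ f y) ∨ ∃ x ∈ L, f x + r ≤ f p := by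
    simp only [Finset.mem_insert, Finset.mem_union] at hx hy
    rcases le_total (f p + r) (f y) with hpy | hyp
    · refine .inl ⟨y, ?_, hpy⟩
      rcases hy with rfl | hyL | hyT
      · linarith
      · linarith [hL y hyL]
      · exact hyT
    · have hxp : f x + r ≤ f p := by linarith
      refine .inr ⟨x, ?_, hxp⟩
      rcases hx with rfl | hxL | hxT
      · linarith
      · exact hxL
      · linarith [hT x hxT]
  have half_le := card_mul_add_half_le_of_median μ (by simpa using h) hC f_ne_zero hf_norm.le hpL
    hpT hLT (hT_card.trans hL_card.symm) hL hT far
  calc (insert p (L ∪ T)).card * μ (Metric.ball 0 r)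
      = 2 * (L.card * μ (Metric.ball 0 r) + μ (Metric.ball 0 r) / 2) := by
        rw [hk, hL_card, mul_add, ENNReal.mul_div_cancel two_ne_zero ENNReal.ofNat_ne_top]
        push_cast
        ring
    _ ≤ 2 * μ C := by gcongr

theorem card_mul_addHaar_ball_le (h : IsMidpointPacking (s : Set X) r C) (hC : MeasurableSet C)
    (hr : 0 < r) (hs : 1 < s.card) : s.card * μ (Metric.ball 0 r) ≤ 2 * μ C := by
  rcases s.card.even_or_odd with heven | hodd
  · exact h.card_mul_addHaar_ball_le_of_even μ hC heven
  · exact h.card_mul_addHaar_ball_le_of_odd μ hC hr hodd hs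

end Measure

end IsMidpointPacking

theorem isMidpointPacking_ball_of_norm_add_le {X : Type*} [NormedAddCommGroup X]
    [NormedSpace ℝ X] {S : Set X} {δ : ℝ} (hS : ∀ x ∈ S, 1 ≤ ‖x‖)
    (hsum : S.Pairwise fun x y => ‖x + y‖ ≤ δ) :
    IsMidpointPacking S (1 - δ / 2) (Metric.ball 0 1) where
  two_mul_le_dist x hx y hy hxy := by
    have triangle : 2 * ‖x‖ ≤ ‖x + y‖ + ‖x - y‖ := by
      simpa [← two_smul ℝ x, norm_smul] using norm_add_le (x + y) (x - y)
    change 2 * (1 - δ / 2) ≤ dist x y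
    rw [dist_eq_norm]
    linarith [hS x hx, hsum hx hy hxy]
  midpoint_mem x hx y hy hxy a ha b hb := by
    rw [mem_ball_iff_norm] at ha hb
    have norm_add_lt : ‖a + b‖ < 2 :=
      calc ‖a + b‖ = ‖(x + y) + ((a - x) + (b - y))‖ := by congr 1; abel
        _ ≤ ‖x + y‖ + (‖a - x‖ + ‖b - y‖) :=
          (norm_add_le _ _).trans (by gcongr; exact norm_add_le _ _)
        _ < 2 := by linarith [hsum hx hy hxy]
    rw [mem_ball_zero_iff, midpoint_eq_smul_add, invOf_eq_inv, norm_smul, norm_inv,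
      Real.norm_ofNat]
    linarith

theorem card_le_of_isMidpointPacking_ball {X : Type*} [NormedAddCommGroup X]
    [NormedSpace ℝ X] [FiniteDimensional ℝ X] {s : Finset X} {r : ℝ} (hr₀ : 0 < r) (hr₁ : r ≤ 1)
    (h : IsMidpointPacking (s : Set X) r (Metric.ball 0 1)) :
    (s.card : ℝ) ≤ 2 * (1 / r) ^ finrank ℝ X := by
  rcases le_or_gt s.card 1 with hs | hs
  · have one_le : 1 ≤ (1 / r) ^ finrank ℝ X := one_le_pow₀ ((one_le_div hr₀).mpr hr₁)
    have card_le_one : (s.card : ℝ) ≤ 1 := mod_cast hs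
    linarith
  let _ : MeasurableSpace X := borel X
  have _ : BorelSpace X := ⟨rfl⟩
  let μ : Measure X := Measure.addHaar
  have ball_ne_zero : μ (Metric.ball 0 1) ≠ 0 := (Metric.measure_ball_pos μ 0 one_pos).ne'
  have ball_ne_top : μ (Metric.ball 0 1) ≠ ∞ := measure_ball_lt_top.ne
  have volume_le := h.card_mul_addHaar_ball_le μ measurableSet_ball hr₀ hs
  rw [Measure.addHaar_ball_of_pos μ 0 hr₀, ← mul_assoc,
    ENNReal.mul_le_mul_iff_left ball_ne_zero ball_ne_top] at volume_le
  have card_mul_le : s.card * r ^ finrank ℝ X ≤ 2 := by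
    simpa [ENNReal.toReal_ofReal (pow_nonneg hr₀.le _)] using
      ENNReal.toReal_mono ENNReal.ofNat_ne_top volume_le
  rwa [one_div, inv_pow, ← div_eq_mul_inv, le_div_iff₀ (pow_pos hr₀ _)]

theorem finite_and_natCard_le_of_forall_finset {α : Type*} {S : Set α} {b : ℝ}
    (hS : ∀ t : Finset α, ↑t ⊆ S → (t.card : ℝ) ≤ b) : S.Finite ∧ (Nat.card S : ℝ) ≤ b := by
  have finite : S.Finite := by
    by_contra hinf
    obtain ⟨n, hn⟩ := exists_nat_gt b
    obtain ⟨t, htS, ht⟩ := Set.Infinite.exists_subset_card_eq hinf n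
    exact (hn.trans_eq (congrArg Nat.cast ht.symm)).not_ge (hS t htS)
  refine ⟨finite, ?_⟩
  rw [Nat.card_eq_card_finite_toFinset finite]
  exact hS _ finite.coe_toFinset.subset

theorem delta_additive_card_bound_general {X : Type*} [NormedAddCommGroup X] [NormedSpace ℝ X]
    [FiniteDimensional ℝ X] {δ : ℝ} (hδ0 : 0 ≤ δ) (hδ2 : δ < 2) {S : Set X}
    (hS : ∀ x ∈ S, 1 ≤ ‖x‖) (hsum : S.Pairwise fun x y => ‖x + y‖ ≤ δ) :
    S.Finite ∧ (Nat.card S : ℝ) ≤ 2 * (2 / (2 - δ)) ^ finrank ℝ X := by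
  refine finite_and_natCard_le_of_forall_finset fun t ht => ?_
  have packing := isMidpointPacking_ball_of_norm_add_le (fun x hx => hS x (ht hx)) (hsum.mono ht)
  have radius_eq : 2 / (2 - δ) = 1 / (1 - δ / 2) := by
    have : 2 - δ ≠ 0 := by linarith
    field_simp
  rw [radius_eq]
  exact card_le_of_isMidpointPacking_ball (by linarith) (by linarith) packing

theorem delta_additive_card_bound
    (X : Type*) [NormedAddCommGroup X] [NormedSpace ℝ X]
    [FiniteDimensional ℝ X] (d : ℕ) (hd : 1 ≤ d)
    (hdim : Module.finrank ℝ X = d)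
    (δ : ℝ) (hδ0 : 0 < δ) (hδ2 : δ < 2)
    (S : Set X) (hunit : ∀ x ∈ S, ‖x‖ = 1)
    (hsum : ∀ x ∈ S, ∀ y ∈ S, x ≠ y → ‖x + y‖ ≤ δ) :
    S.Finite ∧ (Nat.card S : ℝ) ≤ 2 * (2 / (2 - δ)) ^ d :=
  hdim ▸ delta_additive_card_bound_general hδ0.le hδ2 (fun x hx => (hunit x hx).ge) hsum
end

section
/- For every δ with 2/3 < δ < 2 there exists ε > 0 such that for all sufficiently large d there exist a norm ‖·‖ on ℝ^d (a function N : ℝ^d → ℝ satisfying N(x) = 0 iff x = 0, N(cx) = |c|·N(x), and N(x+y) ≤ N(x) + N(y)) and a finite set S of vectors in ℝ^d with |S| > (1+ε)^d, N(x) = 1 for all x ∈ S, and N(x + y) ≤ δ for all distinct x, y ∈ S. -/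
/-!
By Hoeffding's inequality a given sign vector in `ℝⁿ` is almost orthogonal to all but an
exponentially small proportion of the others, so a maximal family of pairwise almost orthogonal sign
vectors is exponentially large. Each sign vector `u` is lifted to `(1, u)` in `ℝⁿ⁺¹`, and paired
with the functional `f u (t, x) = -t / 3 + 4 / 3 * ⟨u, x⟩ / n`. Then `f u (1, u) = 1`, while
`f u (1, v) ≈ -1 / 3` for the other members `v` of the family. In the norm
`max (‖x‖ / 3) (max_u |f u x|)` the lifted vectors are therefore unit vectors, and on a sum of two
of them each functional is close to `1 - 1 / 3 = 2 / 3` or to `-1 / 3 - 1 / 3 = -2 / 3`.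
-/

open Filter Matrix Real

open scoped NNReal

section SignVectors

variable (ι : Type*) [Fintype ι] [DecidableEq ι]

/-- The vertices of the cube `{1, -1}^ι`, the ambient set in which the code is chosen. -/
noncomputable def signVectors : Finset (ι → ℝ) := Fintype.piFinset fun _ => {1, -1}

variable {ι}

lemma mem_signVectors {u : ι → ℝ} : u ∈ signVectors ι ↔ ∀ k, u k = 1 ∨ u k = -1 := by
  simp [signVectors]

variable (ι) in
lemma card_signVectors : (signVectors ι).card = 2 ^ Fintype.card ι := by
  have card_signs : ({1, -1} : Finset ℝ).card = 2 := Finset.card_pair (by norm_num)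
  simp [signVectors, card_signs]

lemma abs_apply_of_mem_signVectors {u : ι → ℝ} (hu : u ∈ signVectors ι) (k : ι) : |u k| = 1 := by
  rcases mem_signVectors.1 hu k with h | h <;> simp [h]

lemma dotProduct_self_of_mem_signVectors {u : ι → ℝ} (hu : u ∈ signVectors ι) :
    u ⬝ᵥ u = Fintype.card ι := by
  have mul_self_eq_one (k : ι) : u k * u k = 1 := by
    rw [← abs_mul_abs_self, abs_apply_of_mem_signVectors hu, one_mul]
  simp [dotProduct, mul_self_eq_one]

lemma sum_exp_dotProduct_signVectors (a : ι → ℝ) :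
    ∑ v ∈ signVectors ι, exp (a ⬝ᵥ v) = ∏ k, 2 * cosh (a k) := by
  have sum_signs (k : ι) : ∑ s ∈ ({1, -1} : Finset ℝ), exp (a k * s) = 2 * cosh (a k) := by
    rw [Finset.sum_pair (by norm_num), cosh_eq, mul_one, mul_neg_one]
    ring
  simp only [dotProduct, exp_sum, signVectors,
    Finset.sum_prod_piFinset _ fun k s => exp (a k * s), sum_signs]

lemma sum_exp_dotProduct_signVectors_le (a : ι → ℝ) :
    ∑ v ∈ signVectors ι, exp (a ⬝ᵥ v) ≤ 2 ^ Fintype.card ι * exp (a ⬝ᵥ a / 2) := by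
  calc
    ∑ v ∈ signVectors ι, exp (a ⬝ᵥ v) = ∏ k, 2 * cosh (a k) := sum_exp_dotProduct_signVectors a
    _ ≤ ∏ k, 2 * exp (a k ^ 2 / 2) :=
      Finset.prod_le_prod (fun k _ => by positivity) fun k _ => by
        gcongr
        exact cosh_le_exp_half_sq (a k)
    _ = 2 ^ Fintype.card ι * exp (a ⬝ᵥ a / 2) := by
      simp only [Finset.prod_mul_distrib, Finset.prod_const, Finset.card_univ, ← exp_sum,
        dotProduct, Finset.sum_div, sq]

lemma card_signVectors_filter_le_dotProduct_mul_exp_le (a : ι → ℝ) (s : ℝ) {t : ℝ} (ht : 0 ≤ t) :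
    ({v ∈ signVectors ι | s ≤ a ⬝ᵥ v}.card : ℝ) * exp (t * s)
      ≤ 2 ^ Fintype.card ι * exp (t ^ 2 * (a ⬝ᵥ a) / 2) := by
  calc
    ({v ∈ signVectors ι | s ≤ a ⬝ᵥ v}.card : ℝ) * exp (t * s)
      ≤ ∑ v ∈ signVectors ι with s ≤ a ⬝ᵥ v, exp ((t • a) ⬝ᵥ v) := by
        rw [← nsmul_eq_mul]
        refine Finset.card_nsmul_le_sum _ _ _ fun v hv => ?_
        rw [smul_dotProduct, smul_eq_mul]
        gcongr
        exact (Finset.mem_filter.1 hv).2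
    _ ≤ ∑ v ∈ signVectors ι, exp ((t • a) ⬝ᵥ v) :=
      Finset.sum_le_sum_of_subset_of_nonneg (Finset.filter_subset _ _) fun _ _ _ => (exp_pos _).le
    _ ≤ 2 ^ Fintype.card ι * exp ((t • a) ⬝ᵥ (t • a) / 2) := sum_exp_dotProduct_signVectors_le _
    _ = 2 ^ Fintype.card ι * exp (t ^ 2 * (a ⬝ᵥ a) / 2) := by
      simp only [smul_dotProduct, dotProduct_smul, smul_eq_mul, ← mul_assoc, sq]

lemma card_signVectors_filter_le_dotProduct_le (a : ι → ℝ) {s : ℝ} (hs : 0 ≤ s) :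
    ({v ∈ signVectors ι | s ≤ a ⬝ᵥ v}.card : ℝ)
      ≤ 2 ^ Fintype.card ι * exp (-(s ^ 2 / (2 * (a ⬝ᵥ a)))) := by
  have self_nonneg : 0 ≤ a ⬝ᵥ a := Finset.sum_nonneg fun k _ => mul_self_nonneg (a k)
  rcases self_nonneg.eq_or_lt with ha | ha
  · -- Division by zero makes the exponent `0`, leaving the trivial bound.
    simpa [← ha, card_signVectors] using
      (Nat.cast_le (α := ℝ)).2 (Finset.card_filter_le (signVectors ι) (s ≤ a ⬝ᵥ ·))
  · have chernoff :=
      card_signVectors_filter_le_dotProduct_mul_exp_le a s (t := s / (a ⬝ᵥ a)) (by positivity)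
    rw [← le_div_iff₀ (exp_pos _), mul_div_assoc, ← exp_sub] at chernoff
    have exponent_eq : (s / (a ⬝ᵥ a)) ^ 2 * (a ⬝ᵥ a) / 2 - s / (a ⬝ᵥ a) * s
        = -(s ^ 2 / (2 * (a ⬝ᵥ a))) := by
      field_simp
      ring
    rwa [exponent_eq] at chernoff

lemma card_signVectors_filter_le_abs_dotProduct_le (a : ι → ℝ) {s : ℝ} (hs : 0 ≤ s) :
    ({v ∈ signVectors ι | s ≤ |a ⬝ᵥ v|}.card : ℝ)
      ≤ 2 * (2 ^ Fintype.card ι * exp (-(s ^ 2 / (2 * (a ⬝ᵥ a))))) := by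
  have card_le_add : ({v ∈ signVectors ι | s ≤ |a ⬝ᵥ v|}.card : ℝ)
      ≤ {v ∈ signVectors ι | s ≤ a ⬝ᵥ v}.card + {v ∈ signVectors ι | s ≤ -a ⬝ᵥ v}.card := by
    simp only [le_abs, ← neg_dotProduct, Finset.filter_or]
    exact_mod_cast Finset.card_union_le _ _
  have upper_tail := card_signVectors_filter_le_dotProduct_le a hs
  have lower_tail := card_signVectors_filter_le_dotProduct_le (-a) hs
  rw [neg_dotProduct_neg] at lower_tail
  linarith

end SignVectors

section Packing

variable {α : Type*}

lemma exists_subset_pairwise_not_forall_exists_rel (A : Finset α) (r : α → α → Prop) [Std.Symm r]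
    (hrefl : ∀ u ∈ A, r u u) :
    ∃ S ⊆ A, (S : Set α).Pairwise (fun u v => ¬ r u v) ∧ ∀ v ∈ A, ∃ u ∈ S, r u v := by
  classical
  let independentSets := A.powerset.filter fun S : Finset α =>
    (S : Set α).Pairwise fun u v => ¬ r u v
  have mem_independentSets {S : Finset α} : S ∈ independentSets ↔
      S ⊆ A ∧ (S : Set α).Pairwise fun u v => ¬ r u v := by
    rw [Finset.mem_filter, Finset.mem_powerset]
  obtain ⟨S, hS⟩ := independentSets.exists_maximal ⟨∅, mem_independentSets.2 (by simp)⟩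
  obtain ⟨hSA, hpair⟩ := mem_independentSets.1 hS.prop
  refine ⟨S, hSA, hpair, fun v hv => ?_⟩
  by_contra! hunrelated
  have insert_mem : insert v S ∈ independentSets := by
    rw [mem_independentSets, Finset.coe_insert]
    exact ⟨Finset.insert_subset hv hSA, hpair.insert fun u hu _ =>
      ⟨fun h => hunrelated u hu (symm h), hunrelated u hu⟩⟩
  have mem_of_maximal : v ∈ S :=
    hS.le_of_ge insert_mem (Finset.subset_insert v S) (Finset.mem_insert_self v S)
  exact hunrelated v mem_of_maximal (hrefl v hv)

lemma exists_subset_pairwise_not_card_le_card_mul (A : Finset α) (r : α → α → Prop)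
    [DecidableRel r] [Std.Symm r] (hrefl : ∀ u ∈ A, r u u) {K : ℝ}
    (hK : ∀ u ∈ A, ({v ∈ A | r u v}.card : ℝ) ≤ K) :
    ∃ S ⊆ A, (S : Set α).Pairwise (fun u v => ¬ r u v) ∧ (A.card : ℝ) ≤ S.card * K := by
  classical
  obtain ⟨S, hSA, hpair, hcover⟩ := exists_subset_pairwise_not_forall_exists_rel A r hrefl
  have subset_biUnion : A ⊆ S.biUnion fun u => {v ∈ A | r u v} := fun v hv => by
    obtain ⟨u, hu, huv⟩ := hcover v hv
    exact Finset.mem_biUnion.2 ⟨u, hu, Finset.mem_filter.2 ⟨hv, huv⟩⟩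
  refine ⟨S, hSA, hpair, ?_⟩
  calc
    (A.card : ℝ) ≤ ∑ u ∈ S, ({v ∈ A | r u v}.card : ℝ) := by
      exact_mod_cast (Finset.card_le_card subset_biUnion).trans Finset.card_biUnion_le
    _ ≤ ∑ _u ∈ S, K := Finset.sum_le_sum fun u hu => hK u (hSA hu)
    _ = S.card * K := by rw [Finset.sum_const, nsmul_eq_mul]

end Packing

lemma exists_almost_orthogonal_signVectors (ι : Type*) [Fintype ι] [DecidableEq ι] {η : ℝ}
    (hη0 : 0 ≤ η) (hη1 : η ≤ 1) :
    ∃ S ⊆ signVectors ι,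
      (S : Set (ι → ℝ)).Pairwise (fun u v => |u ⬝ᵥ v| < η * Fintype.card ι) ∧
      exp (η ^ 2 / 2 * Fintype.card ι) ≤ 2 * S.card := by
  set n : ℝ := (Fintype.card ι : ℝ) with hn
  have n_nonneg : 0 ≤ n := Nat.cast_nonneg _
  have : Std.Symm fun u v : ι → ℝ => η * n ≤ |u ⬝ᵥ v| :=
    ⟨fun u v h => by rwa [dotProduct_comm]⟩
  have self_correlated (u) (hu : u ∈ signVectors ι) : η * n ≤ |u ⬝ᵥ u| := by
    rw [dotProduct_self_of_mem_signVectors hu, abs_of_nonneg n_nonneg]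
    exact mul_le_of_le_one_left n_nonneg hη1
  have card_correlated_le (u) (hu : u ∈ signVectors ι) :
      ({v ∈ signVectors ι | η * n ≤ |u ⬝ᵥ v|}.card : ℝ)
        ≤ 2 * (2 ^ Fintype.card ι * exp (-(η ^ 2 / 2 * n))) := by
    have hoeffding := card_signVectors_filter_le_abs_dotProduct_le u (mul_nonneg hη0 n_nonneg)
    have exponent_eq : (η * n) ^ 2 / (2 * n) = η ^ 2 / 2 * n := by
      rw [mul_pow, mul_div_mul_comm, sq n, mul_self_div_self]
    rwa [dotProduct_self_of_mem_signVectors hu, ← hn, exponent_eq] at hoeffding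
  obtain ⟨S, hS, hpair, hcard⟩ :=
    exists_subset_pairwise_not_card_le_card_mul (signVectors ι) _ self_correlated card_correlated_le
  refine ⟨S, hS, hpair.mono' fun u v => lt_of_not_ge, ?_⟩
  rw [card_signVectors, Nat.cast_pow, Nat.cast_ofNat, exp_neg] at hcard
  field_simp at hcard
  rwa [div_mul_eq_mul_div, mul_comm 2]

section SlabSeminorm

variable {E κ : Type*} [SeminormedAddCommGroup E] [NormedSpace ℝ E] [Fintype κ]

/-- The seminorm `max (c * ‖x‖) (max_k |f k x|)`. Its unit ball is the ball of radius `c⁻¹`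
intersected with the slabs `|f k x| ≤ 1`; the term `c * ‖x‖` makes it a norm when `c ≠ 0`. -/
noncomputable def slabSeminorm (c : ℝ≥0) (f : κ → Module.Dual ℝ E) : Seminorm ℝ E :=
  c • normSeminorm ℝ E ⊔ (normSeminorm ℝ (κ → ℝ)).comp (LinearMap.pi f)

variable {c : ℝ≥0} {f : κ → Module.Dual ℝ E}

lemma slabSeminorm_le_iff {x : E} {r : ℝ} (hr : 0 ≤ r) :
    slabSeminorm c f x ≤ r ↔ c * ‖x‖ ≤ r ∧ ∀ k, |f k x| ≤ r := by
  rw [slabSeminorm, Seminorm.sup_apply, sup_le_iff, Seminorm.comp_apply, coe_normSeminorm,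
    pi_norm_le_iff_of_nonneg hr]
  rfl

lemma abs_apply_le_slabSeminorm (k : κ) (x : E) : |f k x| ≤ slabSeminorm c f x :=
  ((slabSeminorm_le_iff (apply_nonneg _ x)).1 le_rfl).2 k

lemma slabSeminorm_eq_zero_iff {F : Type*} [NormedAddCommGroup F] [NormedSpace ℝ F]
    {f : κ → Module.Dual ℝ F} (hc : c ≠ 0) {x : F} : slabSeminorm c f x = 0 ↔ x = 0 := by
  refine ⟨fun h => ?_, fun h => h ▸ map_zero _⟩
  have norm_le : c * ‖x‖ ≤ 0 := ((slabSeminorm_le_iff le_rfl).1 h.le).1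
  exact norm_le_zero_iff.1 (nonpos_of_mul_nonpos_right norm_le (by positivity))

variable {e : κ → E} {θ : ℝ}

lemma slabSeminorm_third_eq_one (he : ∀ k, ‖e k‖ ≤ 1) (hdiag : ∀ k, f k (e k) = 1)
    (hoff : Pairwise fun k l => |f k (e l) + 1 / 3| ≤ θ) (hθ : θ ≤ 2 / 3) (k : κ) :
    slabSeminorm (1 / 3) f (e k) = 1 := by
  refine le_antisymm ((slabSeminorm_le_iff zero_le_one).2 ⟨?_, fun l => ?_⟩) ?_
  · push_cast
    linarith [he k]
  · rcases eq_or_ne l k with rfl | hlk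
    · simp [hdiag]
    · have := abs_le.1 (hoff hlk)
      exact abs_le.2 ⟨by linarith, by linarith⟩
  · simpa [hdiag] using abs_apply_le_slabSeminorm (c := 1 / 3) (f := f) k (e k)

lemma slabSeminorm_third_add_le (he : ∀ k, ‖e k‖ ≤ 1) (hdiag : ∀ k, f k (e k) = 1)
    (hoff : Pairwise fun k l => |f k (e l) + 1 / 3| ≤ θ) {k l : κ} (hkl : k ≠ l) :
    slabSeminorm (1 / 3) f (e k + e l) ≤ 2 / 3 + 2 * θ := by
  have θ_nonneg : 0 ≤ θ := (abs_nonneg _).trans (hoff hkl)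
  refine (slabSeminorm_le_iff (by positivity)).2 ⟨?_, fun m => ?_⟩
  · have norm_add_le_two : ‖e k + e l‖ ≤ 1 + 1 := norm_add_le_of_le (he k) (he l)
    push_cast
    linarith
  · rw [map_add, abs_le]
    rcases eq_or_ne m k with rfl | hmk
    · have := abs_le.1 (hoff hkl)
      constructor <;> linarith [hdiag m]
    · have hk := abs_le.1 (hoff hmk)
      rcases eq_or_ne m l with rfl | hml
      · constructor <;> linarith [hdiag m]
      · have hl := abs_le.1 (hoff hml)
        constructor <;> linarith

end SlabSeminorm

section TiltedFunctional

variable {n : ℕ}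

/-- The functional `(t, x) ↦ -t / 3 + 4 / 3 * ⟨u, x⟩ / n` on `ℝⁿ⁺¹`. The coefficients are chosen so
that on a lifted vector `(1, v)` it is `1` if `⟨u, v⟩ = n`, and `-1 / 3` if `⟨u, v⟩ = 0`. -/
noncomputable def tiltedFunctional (u : Fin n → ℝ) : Module.Dual ℝ (Fin (n + 1) → ℝ) :=
  dotProductBilin ℝ ℝ (vecCons (-1 / 3) ((4 / 3 / n : ℝ) • u))

lemma tiltedFunctional_vecCons_one (u v : Fin n → ℝ) :
    tiltedFunctional u (vecCons 1 v) = -1 / 3 + 4 / 3 * (u ⬝ᵥ v / n) := by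
  simp only [tiltedFunctional, dotProductBilin_apply_apply, cons_dotProduct_cons, smul_dotProduct,
    smul_eq_mul]
  ring

lemma tiltedFunctional_vecCons_one_self (hn : n ≠ 0) {u : Fin n → ℝ}
    (hu : u ∈ signVectors (Fin n)) : tiltedFunctional u (vecCons 1 u) = 1 := by
  rw [tiltedFunctional_vecCons_one, dotProduct_self_of_mem_signVectors hu, Fintype.card_fin,
    div_self (Nat.cast_ne_zero.2 hn)]
  norm_num

lemma abs_tiltedFunctional_vecCons_one_add_third_le (hn : n ≠ 0) {u v : Fin n → ℝ} {η : ℝ}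
    (huv : |u ⬝ᵥ v| ≤ η * n) : |tiltedFunctional u (vecCons 1 v) + 1 / 3| ≤ 4 / 3 * η := by
  have n_pos : (0 : ℝ) < n := by positivity
  calc
    |tiltedFunctional u (vecCons 1 v) + 1 / 3| = |4 / 3 * (u ⬝ᵥ v / n)| := by
      rw [tiltedFunctional_vecCons_one]
      ring_nf
    _ = 4 / 3 * (|u ⬝ᵥ v| / n) := by
      rw [abs_mul, abs_div (u ⬝ᵥ v), abs_of_pos n_pos, abs_of_pos (by norm_num)]
    _ ≤ 4 / 3 * η := by
      gcongr
      exact (div_le_iff₀ n_pos).2 huv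

lemma norm_vecCons_one_le_one {v : Fin n → ℝ} (hv : v ∈ signVectors (Fin n)) :
    ‖(vecCons 1 v : Fin (n + 1) → ℝ)‖ ≤ 1 := by
  rw [pi_norm_le_iff_of_nonneg zero_le_one, Fin.forall_fin_succ]
  simp [abs_apply_of_mem_signVectors hv]

end TiltedFunctional

section CodeSeminorm

variable {n : ℕ} {S : Finset (Fin n → ℝ)} {η : ℝ}

/-- The seminorm on `ℝⁿ⁺¹` for which the vectors `(1, u)` with `u` in the code `S` are to form an
additive set. -/
noncomputable def codeSeminorm (S : Finset (Fin n → ℝ)) : Seminorm ℝ (Fin (n + 1) → ℝ) :=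
  slabSeminorm (1 / 3) fun u : S => tiltedFunctional u.1

lemma codeSeminorm_eq_zero_iff {x : Fin (n + 1) → ℝ} : codeSeminorm S x = 0 ↔ x = 0 :=
  slabSeminorm_eq_zero_iff (by norm_num)

lemma pairwise_abs_tiltedFunctional_vecCons_one_add_third_le (hn : n ≠ 0)
    (hpair : (S : Set (Fin n → ℝ)).Pairwise fun u v => |u ⬝ᵥ v| ≤ η * n) :
    Pairwise fun u v : S => |tiltedFunctional u.1 (vecCons 1 v.1) + 1 / 3| ≤ 4 / 3 * η :=
  fun u v huv => abs_tiltedFunctional_vecCons_one_add_third_le hn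
    (hpair u.2 v.2 (Subtype.coe_ne_coe.2 huv))

lemma codeSeminorm_vecCons_one_eq_one (hn : n ≠ 0) (hS : S ⊆ signVectors (Fin n))
    (hpair : (S : Set (Fin n → ℝ)).Pairwise fun u v => |u ⬝ᵥ v| ≤ η * n) (hη : η ≤ 1 / 2)
    {u : Fin n → ℝ} (hu : u ∈ S) : codeSeminorm S (vecCons 1 u) = 1 :=
  slabSeminorm_third_eq_one (fun v : S => norm_vecCons_one_le_one (hS v.2))
    (fun v => tiltedFunctional_vecCons_one_self hn (hS v.2))
    (pairwise_abs_tiltedFunctional_vecCons_one_add_third_le hn hpair) (by linarith) ⟨u, hu⟩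

lemma codeSeminorm_vecCons_one_add_le (hn : n ≠ 0) (hS : S ⊆ signVectors (Fin n))
    (hpair : (S : Set (Fin n → ℝ)).Pairwise fun u v => |u ⬝ᵥ v| ≤ η * n)
    {u v : Fin n → ℝ} (hu : u ∈ S) (hv : v ∈ S) (huv : u ≠ v) :
    codeSeminorm S (vecCons 1 u + vecCons 1 v) ≤ 2 / 3 + 8 / 3 * η :=
  (slabSeminorm_third_add_le (fun w : S => norm_vecCons_one_le_one (hS w.2))
    (fun w => tiltedFunctional_vecCons_one_self hn (hS w.2))
    (pairwise_abs_tiltedFunctional_vecCons_one_add_third_le hn hpair)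
    (k := ⟨u, hu⟩) (l := ⟨v, hv⟩) (Subtype.coe_ne_coe.1 huv)).trans_eq (by ring)

end CodeSeminorm

lemma exists_pos_eventually_two_mul_one_add_pow_succ_lt_exp {c : ℝ} (hc : 0 < c) :
    ∃ ε : ℝ, 0 < ε ∧ ∀ᶠ n : ℕ in atTop, 2 * (1 + ε) ^ (n + 1) < exp (c * n) := by
  refine ⟨exp (c / 2) - 1, sub_pos.2 (one_lt_exp_iff.2 (half_pos hc)), ?_⟩
  filter_upwards [tendsto_natCast_atTop_atTop.eventually_ge_atTop (2 / c + 1)] with n hn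
  have exponent_le : 1 + (n + 1 : ℕ) * (c / 2) ≤ c * n := by
    have := mul_le_mul_of_nonneg_left hn hc.le
    rw [mul_add, mul_div_cancel₀ _ hc.ne'] at this
    push_cast
    linarith
  calc
    2 * (1 + (exp (c / 2) - 1)) ^ (n + 1) = 2 * exp ((n + 1 : ℕ) * (c / 2)) := by
      rw [add_sub_cancel, exp_nat_mul]
    _ < exp 1 * exp ((n + 1 : ℕ) * (c / 2)) := by
      gcongr
      exact exp_one_gt_two
    _ = exp (1 + (n + 1 : ℕ) * (c / 2)) := (exp_add _ _).symm
    _ ≤ exp (c * n) := exp_le_exp.2 exponent_le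

theorem exists_norm_with_exponential_delta_additive_set
    (δ : ℝ) (hδ1 : 2 / 3 < δ) (hδ2 : δ < 2) :
    ∃ ε : ℝ, 0 < ε ∧ ∃ D : ℕ, ∀ d : ℕ, D ≤ d →
      ∃ N : (Fin d → ℝ) → ℝ,
        (∀ x, N x = 0 ↔ x = 0) ∧
        (∀ (c : ℝ) (x), N (c • x) = |c| * N x) ∧
        (∀ x y, N (x + y) ≤ N x + N y) ∧
        ∃ S : Finset (Fin d → ℝ),
          (1 + ε) ^ d < (S.card : ℝ) ∧
          (∀ x ∈ S, N x = 1) ∧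
          (∀ x ∈ S, ∀ y ∈ S, x ≠ y → N (x + y) ≤ δ) := by
  obtain ⟨η, hη, hη_lt_min⟩ := exists_between (show 0 < min (1 / 2) (3 / 8 * (δ - 2 / 3)) from
    lt_min (by norm_num) (by linarith))
  obtain ⟨hη_half, hηδ⟩ := lt_min_iff.1 hη_lt_min
  obtain ⟨ε, hε, hgrowth⟩ :=
    exists_pos_eventually_two_mul_one_add_pow_succ_lt_exp (show 0 < η ^ 2 / 2 by positivity)
  obtain ⟨D, hD⟩ := eventually_atTop.1 (hgrowth.and (eventually_ne_atTop 0))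
  refine ⟨ε, hε, D + 1, fun d hd => ?_⟩
  obtain ⟨n, rfl⟩ := Nat.exists_eq_add_of_le' (Nat.one_le_of_lt hd)
  obtain ⟨hpow_lt_exp, hn⟩ := hD n (Nat.le_of_succ_le_succ hd)
  obtain ⟨S, hsign, hpair, hexp_le_card⟩ :=
    exists_almost_orthogonal_signVectors (Fin n) hη.le (by linarith)
  rw [Fintype.card_fin] at hpair hexp_le_card
  replace hpair := hpair.mono' fun _ _ => le_of_lt
  refine ⟨codeSeminorm S, fun x => codeSeminorm_eq_zero_iff, map_smul_eq_mul _, map_add_le_add _,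
    S.image (vecCons 1), ?_, Finset.forall_mem_image.2 fun u hu => ?_,
    Finset.forall_mem_image.2 fun u hu => Finset.forall_mem_image.2 fun v hv huv => ?_⟩
  · rw [Finset.card_image_of_injective _ fun u v huv => (vecCons_inj.1 huv).2]
    linarith
  · exact codeSeminorm_vecCons_one_eq_one hn hsign hpair hη_half.le hu
  · have hsum := codeSeminorm_vecCons_one_add_le hn hsign hpair hu hv (ne_of_apply_ne _ huv)
    linarith
end

section
/- Let X be a d-dimensional real normed space with d ≠ 1 and d ≠ 3. If S is a set of unit vectors in X such that ‖x + y‖ ≤ 2/3 for all distinct x, y ∈ S, then |S| ≤ d. -/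
/-!
A norming functional `g` of a point `x` of a `2/3`-additive set `S` satisfies `g x = 1`. For two
further points `y`, `z` of `S`, the numbers `1 + g y`, `1 + g z` and `-(g y + g z)` have norm at
most `2/3` and sum to `2`, so each of them equals `2/3` and `g y = -1/3`. Hence, as soon as `S` has
three points, these functionals evaluate on `S` to the matrix with diagonal entries `1` and all
other entries `-1/3`. This matrix is nonsingular unless its size is `4`, so `S` is linearly
independent unless it has exactly four points; in that case three of them are independent.
-/

open Cardinal Module

section LinearAlgebra

variable {ι R M : Type*} [CommRing R] [AddCommGroup M] [Module R M] {v : ι → M}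
  {f : ι → Dual R M} {a : R}

theorem one_sub_mul_apply_add_mul_degree_eq_apply_linearCombination
    (hdiag : ∀ i, f i (v i) = 1) (hoff : ∀ i j, j ≠ i → f i (v j) = a) (l : ι →₀ R) (i : ι) :
    (1 - a) * l i + a * l.degree = f i (Finsupp.linearCombination R v l) := by
  induction l using Finsupp.induction_linear with
  | zero => simp
  | add l₁ l₂ h₁ h₂ => simp only [map_add, Finsupp.add_apply, ← h₁, ← h₂]; ring
  | single j r =>
    obtain rfl | hji := eq_or_ne j i
    · simp only [Finsupp.single_eq_same, Finsupp.degree_single, Finsupp.linearCombination_single,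
        map_smul, hdiag, smul_eq_mul]
      ring
    · simp [Finsupp.single_eq_of_ne' hji, hoff i j hji, mul_comm]

/-- The eigenvalues of the matrix of values are `1 - a` and, in size `n`, `1 + (n - 1) * a`. -/
theorem linearIndependent_of_dual_apply_eq_const [IsDomain R]
    (hdiag : ∀ i, f i (v i) = 1) (hoff : ∀ i j, j ≠ i → f i (v j) = a) (ha : a ≠ 1)
    (hcard : ∀ n : ℕ, #ι = n → 1 + ((n : R) - 1) * a ≠ 0) : LinearIndependent R v := by
  rw [linearIndependent_iff]
  intro l hl
  have hcoeff (i : ι) : (1 - a) * l i + a * l.degree = 0 := by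
    rw [one_sub_mul_apply_add_mul_degree_eq_apply_linearCombination hdiag hoff, hl, map_zero]
  suffices hdeg : l.degree = 0 by
    ext i
    simpa [hdeg, sub_eq_zero, ha.symm] using hcoeff i
  by_contra hdeg
  have hsum : 1 + ((l.support.card : R) - 1) * a = 0 := by
    have : ∑ i ∈ l.support, ((1 - a) * l i + a * l.degree) = 0 :=
      Finset.sum_eq_zero fun i _ ↦ hcoeff i
    rw [Finset.sum_add_distrib, ← Finset.mul_sum, ← Finsupp.degree_apply, Finset.sum_const,
      nsmul_eq_mul] at this
    refine (mul_eq_zero.mp ?_).resolve_right hdeg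
    linear_combination this
  have hsupport (i : ι) : i ∈ l.support := by
    by_contra hi
    have ha0 : a = 0 := by simpa [Finsupp.notMem_support_iff.mp hi, hdeg] using hcoeff i
    simp [ha0] at hsum
  refine hcard l.support.card ?_ hsum
  rw [← mk_coe_finset]
  exact (mk_congr (Equiv.subtypeUnivEquiv hsupport)).symm

end LinearAlgebra

theorem eq_neg_one_third_of_norm_add_le {𝕜 : Type*} [RCLike 𝕜] {a b : 𝕜}
    (ha : ‖1 + a‖ ≤ 2 / 3) (hb : ‖1 + b‖ ≤ 2 / 3) (hab : ‖a + b‖ ≤ 2 / 3) : a = -1 / 3 := by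
  have hre : 2 / 3 ≤ RCLike.re (1 + a) := by
    have hreb := (RCLike.re_le_norm (1 + b)).trans hb
    have hreab := (neg_le_of_abs_le (RCLike.abs_re_le_norm (a + b))).trans' (neg_le_neg hab)
    simp only [map_add, RCLike.one_re] at hreb hreab ⊢
    linarith
  have hnorm : ‖1 + a‖ = 2 / 3 := ha.antisymm (hre.trans (RCLike.re_le_norm _))
  have heq : 1 + a = ‖1 + a‖ := RCLike.norm_le_re_iff_eq_norm.mp (ha.trans hre)
  rw [hnorm] at heq
  push_cast at heq
  linear_combination heq

/-- An `r`-additive set: a set of unit vectors whose sums of two distinct members have norm at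
most `r`. Finiteness is not part of the notion. -/
structure IsAdditiveSet {X : Type*} [SeminormedAddCommGroup X] (r : ℝ) (S : Set X) : Prop where
  norm_eq_one : ∀ x ∈ S, ‖x‖ = 1
  norm_add_le : ∀ x ∈ S, ∀ y ∈ S, x ≠ y → ‖x + y‖ ≤ r

namespace IsAdditiveSet

theorem mono {X : Type*} [SeminormedAddCommGroup X] {r : ℝ} {S T : Set X}
    (hS : IsAdditiveSet r S) (hTS : T ⊆ S) : IsAdditiveSet r T where
  norm_eq_one x hx := hS.norm_eq_one x (hTS hx)
  norm_add_le x hx y hy := hS.norm_add_le x (hTS hx) y (hTS hy)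

variable (𝕜 : Type*) {X : Type*} [RCLike 𝕜] [SeminormedAddCommGroup X] [NormedSpace 𝕜 X]
  {S : Set X}

theorem one_le_rank {r : ℝ} (hS : IsAdditiveSet r S) (hne : S.Nonempty) :
    1 ≤ Module.rank 𝕜 X := by
  obtain ⟨x, hx⟩ := hne
  have hx0 : x ≠ 0 := ne_zero_of_norm_ne_zero (by simp [hS.norm_eq_one x hx])
  have : Nontrivial X := nontrivial_of_ne x 0 hx0
  exact Cardinal.one_le_iff_ne_zero.mpr rank_pos.ne'

theorem exists_dual_apply_eq (hS : IsAdditiveSet (2 / 3) S) (hcard : 3 ≤ #S) (x : S) :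
    ∃ f : Dual 𝕜 X, f x = 1 ∧ ∀ y : S, y ≠ x → f y = -1 / 3 := by
  obtain ⟨g, hg_norm, hgx⟩ := exists_dual_vector'' 𝕜 (x : X)
  replace hgx : g x = 1 := by simp [hgx, hS.norm_eq_one x x.2]
  have hg_add (y z : S) (hyz : y ≠ z) : ‖g y + g z‖ ≤ 2 / 3 := by
    rw [← map_add]
    exact (g.le_of_opNorm_le hg_norm _).trans <| (one_mul _).trans_le <|
      hS.norm_add_le y y.2 z z.2 (Subtype.coe_ne_coe.mpr hyz)
  refine ⟨g, hgx, fun y hyx ↦ ?_⟩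
  obtain ⟨z, hzx, hzy⟩ := exists_ne_ne_of_three_le hcard x y
  exact eq_neg_one_third_of_norm_add_le (hgx ▸ hg_add x y hyx.symm) (hgx ▸ hg_add x z hzx.symm)
    (hg_add y z hzy.symm)

theorem linearIndependent (hS : IsAdditiveSet (2 / 3) S) (hcard : 3 ≤ #S) (hcard_ne : #S ≠ 4) :
    LinearIndependent 𝕜 ((↑) : S → X) := by
  choose f hdiag hoff using hS.exists_dual_apply_eq 𝕜 hcard
  refine linearIndependent_of_dual_apply_eq_const hdiag hoff (by norm_num) fun n hn hzero ↦ ?_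
  have hn4 : (n : 𝕜) = 4 := by linear_combination -3 * hzero
  exact hcard_ne (by rw [hn]; exact_mod_cast hn4)

theorem three_le_rank (hS : IsAdditiveSet (2 / 3) S) (hcard : 3 ≤ #S) :
    3 ≤ Module.rank 𝕜 X := by
  obtain ⟨T, hTS, hT⟩ := le_mk_iff_exists_subset.mp hcard
  rw [← hT]
  exact ((hS.mono hTS).linearIndependent 𝕜 hT.ge (by rw [hT]; norm_num)).cardinal_le_rank

end IsAdditiveSet

theorem two_thirds_additive_card_le_dim_general (𝕜 : Type*) {X : Type*} [RCLike 𝕜]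
    [SeminormedAddCommGroup X] [NormedSpace 𝕜 X] (hrank1 : Module.rank 𝕜 X ≠ 1)
    (hrank3 : Module.rank 𝕜 X ≠ 3) {S : Set X} (hS : IsAdditiveSet (2 / 3) S) :
    #S ≤ Module.rank 𝕜 X := by
  obtain rfl | hne := S.eq_empty_or_nonempty
  · simp
  obtain hlt | hge := lt_or_ge #S 3
  · calc
      #S ≤ 2 := lt_natCast_add_one_iff.mp (hlt.trans_eq (by norm_num))
      _ ≤ Module.rank 𝕜 X := two_le_iff_one_lt.mpr ((hS.one_le_rank 𝕜 hne).lt_of_ne' hrank1)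
  obtain hcard4 | hcard4 := eq_or_ne #S 4
  · calc
      #S = 3 + 1 := by rw [hcard4]; norm_num
      _ ≤ Module.rank 𝕜 X := add_one_le_of_lt ((hS.three_le_rank 𝕜 hge).lt_of_ne' hrank3)
  · exact (hS.linearIndependent 𝕜 hge hcard4).cardinal_le_rank

theorem two_thirds_additive_card_le_dim
    (X : Type*) [NormedAddCommGroup X] [NormedSpace ℝ X]
    [FiniteDimensional ℝ X] (d : ℕ)
    (hdim : Module.finrank ℝ X = d) (hd1 : d ≠ 1) (hd3 : d ≠ 3)
    (S : Set X) (hunit : ∀ x ∈ S, ‖x‖ = 1)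
    (hsum : ∀ x ∈ S, ∀ y ∈ S, x ≠ y → ‖x + y‖ ≤ 2 / 3) :
    S.Finite ∧ Nat.card S ≤ d := by
  have hrank : Module.rank ℝ X = d := by rw [← finrank_eq_rank, hdim]
  have hcard : #S ≤ d := hrank ▸ two_thirds_additive_card_le_dim_general ℝ
    (by rw [hrank]; exact_mod_cast hd1) (by rw [hrank]; exact_mod_cast hd3) ⟨hunit, hsum⟩
  have hfin : #S < ℵ₀ := hcard.trans_lt natCast_lt_aleph0
  exact ⟨lt_aleph0_iff_set_finite.mp hfin, (toNat_le_iff_of_lt_aleph0 d hfin).mpr hcard⟩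
end

section
/- Let X be a 3-dimensional real normed space. If S is a set of unit vectors in X such that ‖x + y‖ ≤ 2/3 for all distinct x, y ∈ S, then |S| ≤ 4. -/
/-!
Let `f` be a norming functional of a member `x` of a `2/3`-additive set `S` with at least three
members. For distinct `y, z ∈ S \ {x}` we get `f y ≤ 2/3 - f x = -1/3`, likewise for `z`, and
`-2/3 ≤ f y + f z`, so that `f y = -1/3` exactly. The matrix `(f_x y)` therefore has `1` on the
diagonal and `-1/3` elsewhere; among matrices of this shape only the one of size `4` is singular.
Hence `S` is linearly independent unless it has exactly four members.
-/

open Cardinal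

section LinearAlgebra

variable {R M ι : Type*} [CommRing R] [AddCommGroup M] [Module R M] {v : ι → M} {a b : R}

theorem dual_linearCombination_eq {f : Module.Dual R M} {i : ι} (hfi : f (v i) = a)
    (hf : ∀ j ≠ i, f (v j) = b) (c : ι →₀ R) :
    f (Finsupp.linearCombination R v c) = (a - b) * c i + b * c.sum fun _ t ↦ t := by
  induction c using Finsupp.induction_linear with
  | zero => simp
  | add c d hc hd =>
    rw [map_add, map_add, hc, hd, Finsupp.add_apply,
      Finsupp.sum_add_index' (fun _ ↦ rfl) fun _ _ _ ↦ rfl]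
    ring
  | single j t =>
    rw [Finsupp.linearCombination_single, map_smul, smul_eq_mul, Finsupp.sum_single_index rfl]
    rcases eq_or_ne j i with rfl | hji
    · rw [hfi, Finsupp.single_eq_same]
      ring
    · rw [hf j hji, Finsupp.single_eq_of_ne' hji]
      ring

theorem linearIndependent_of_dual_apply_eq [NoZeroDivisors R] {f : ι → Module.Dual R M}
    (hdiag : ∀ i, f i (v i) = a) (hoff : Pairwise fun i j ↦ f i (v j) = b) (hab : a ≠ b)
    (hcard : Finite ι → a + (Nat.card ι - 1) * b ≠ 0) : LinearIndependent R v := by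
  rw [linearIndependent_iff]
  intro c hc
  set σ := c.sum fun _ t ↦ t
  have dual_relation (i : ι) : (a - b) * c i + b * σ = 0 := by
    rw [← dual_linearCombination_eq (hdiag i) (fun _ hji ↦ hoff hji.symm), hc, map_zero]
  have mul_sum_eq_zero : b * σ = 0 := by
    rcases finite_or_infinite ι with hfin | hinf
    · have := Fintype.ofFinite ι
      have sum_relation : (a + (Nat.card ι - 1) * b) * σ = 0 := by
        have hσ : σ = ∑ i, c i := Finsupp.sum_fintype _ _ fun _ ↦ rfl
        calc (a + (Nat.card ι - 1) * b) * σ = ∑ i, ((a - b) * c i + b * σ) := by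
              rw [Finset.sum_add_distrib, ← Finset.mul_sum, ← hσ, Finset.sum_const,
                Finset.card_univ, Nat.card_eq_fintype_card, nsmul_eq_mul]
              ring
          _ = 0 := Finset.sum_eq_zero fun i _ ↦ dual_relation i
      rw [(mul_eq_zero.mp sum_relation).resolve_left (hcard hfin), mul_zero]
    · obtain ⟨i, hi⟩ := Infinite.exists_notMem_finset c.support
      simpa [Finsupp.notMem_support_iff.mp hi] using dual_relation i
  ext i
  simpa [mul_sum_eq_zero, sub_ne_zero.mpr hab] using dual_relation i

end LinearAlgebra

/-- The `r`-additive sets of the paper: sets of unit vectors whose pairwise sums have norm at most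
`r`. -/
structure IsAdditiveSet_s4 {X : Type*} [SeminormedAddCommGroup X] (r : ℝ) (S : Set X) : Prop where
  norm_eq_one : ∀ x ∈ S, ‖x‖ = 1
  norm_add_le : S.Pairwise fun x y ↦ ‖x + y‖ ≤ r

namespace IsAdditiveSet_s4

variable {X : Type*} [SeminormedAddCommGroup X] [NormedSpace ℝ X] {S : Set X} {r : ℝ}
  {f : StrongDual ℝ X} {x y z : X}

theorem abs_dual_add_le (hS : IsAdditiveSet_s4 r S) (hf : ‖f‖ ≤ 1) (hx : x ∈ S) (hy : y ∈ S)
    (hxy : x ≠ y) : |f x + f y| ≤ r := by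
  rw [← map_add, ← Real.norm_eq_abs]
  exact (f.le_of_opNorm_le hf _).trans (by simpa using hS.norm_add_le hx hy hxy)

theorem dual_apply_le (hS : IsAdditiveSet_s4 r S) (hf : ‖f‖ ≤ 1) (hx : x ∈ S) (hfx : f x = 1)
    (hy : y ∈ S) (hxy : x ≠ y) : f y ≤ r - 1 := by
  linarith [le_of_abs_le (hS.abs_dual_add_le hf hx hy hxy)]

theorem le_dual_apply (hS : IsAdditiveSet_s4 r S) (hf : ‖f‖ ≤ 1) (hx : x ∈ S) (hfx : f x = 1)
    (hy : y ∈ S) (hz : z ∈ S) (hxz : x ≠ z) (hyz : y ≠ z) : 1 - 2 * r ≤ f y := by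
  linarith [neg_le_of_abs_le (hS.abs_dual_add_le hf hy hz hyz), hS.dual_apply_le hf hx hfx hz hxz]

theorem dual_apply_eq_neg_third (hS : IsAdditiveSet_s4 (2 / 3) S) (hcard : 3 ≤ #S) (hf : ‖f‖ ≤ 1)
    (hx : x ∈ S) (hfx : f x = 1) (hy : y ∈ S) (hxy : x ≠ y) : f y = -1 / 3 := by
  obtain ⟨⟨z, hz⟩, hzx, hzy⟩ := exists_ne_ne_of_three_le hcard ⟨x, hx⟩ ⟨y, hy⟩
  have hxz : x ≠ z := fun h ↦ hzx (Subtype.ext h.symm)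
  have hyz : y ≠ z := fun h ↦ hzy (Subtype.ext h.symm)
  linarith [hS.dual_apply_le hf hx hfx hy hxy, hS.le_dual_apply hf hx hfx hy hz hxz hyz]

theorem linearIndepOn_id (hS : IsAdditiveSet_s4 (2 / 3) S) (hcard : 3 ≤ #S) (hcard_ne : #S ≠ 4) :
    LinearIndepOn ℝ id S := by
  choose f hf hfx using fun x : S ↦ exists_dual_vector'' ℝ (x : X)
  have hdiag (x : S) : f x x = 1 := by simp [hfx, hS.norm_eq_one x x.2]
  refine linearIndependent_of_dual_apply_eq (f := fun x ↦ (f x).toLinearMap) hdiag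
    (fun x y hxy ↦ hS.dual_apply_eq_neg_third hcard (hf x) x.2 (hdiag x) y.2
      (Subtype.coe_ne_coe.mpr hxy)) (by norm_num) fun _ hzero ↦ hcard_ne ?_
  have card_eq_four : Nat.card S = 4 := by
    rify
    linarith
  rw [← Nat.cast_card, card_eq_four, Nat.cast_ofNat]

end IsAdditiveSet_s4

theorem two_thirds_additive_card_le_four_dim_three_general {X : Type*} [SeminormedAddCommGroup X]
    [NormedSpace ℝ X] {S : Set X} (hS : IsAdditiveSet_s4 (2 / 3) S) :
    #S ≤ max 4 (Module.rank ℝ X) := by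
  rcases le_or_gt #S 4 with hle | hlt
  · exact le_max_of_le_left hle
  · have hcard : 3 ≤ #S := le_trans (by norm_num) hlt.le
    exact le_max_of_le_right (hS.linearIndepOn_id hcard hlt.ne').cardinal_le_rank

theorem two_thirds_additive_card_le_four_dim_three
    (X : Type*) [NormedAddCommGroup X] [NormedSpace ℝ X]
    (hdim : Module.finrank ℝ X = 3)
    (S : Set X) (hunit : ∀ x ∈ S, ‖x‖ = 1)
    (hsum : ∀ x ∈ S, ∀ y ∈ S, x ≠ y → ‖x + y‖ ≤ 2 / 3) :
    S.Finite ∧ Nat.card S ≤ 4 := by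
  have rank_eq : Module.rank ℝ X = 3 := (Module.rank_eq_ofNat_iff_finrank_eq_ofNat 3).mpr hdim
  have card_le : #S ≤ 4 :=
    calc #S ≤ max 4 (Module.rank ℝ X) :=
          two_thirds_additive_card_le_four_dim_three_general ⟨hunit, hsum⟩
      _ = 4 := by rw [rank_eq, max_eq_left (by norm_num)]
  exact ⟨lt_aleph0_iff_set_finite.mp (card_le.trans_lt ofNat_lt_aleph0),
    (toNat_le_toNat card_le ofNat_lt_aleph0).trans_eq (toNat_ofNat 4)⟩
end

section
/- Let X be a 3-dimensional real normed space containing four distinct unit vectors x₁, x₂, x₃, x₄ with ‖x_i + x_j‖ ≤ 2/3 for all i ≠ j. Then X is isometrically isomorphic to ℓ_1^3, i.e., there is a linear isometric isomorphism from X onto ℝ³ equipped with the norm ‖(a,b,c)‖₁ = |a| + |b| + |c|; equivalently, the unit ball of X is an affine regular octahedron centered at 0. -/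
/-!
A norming functional `f` of `x i` has `f (x j) ≤ -1/3` for `j ≠ i`, because `‖x i + x j‖ ≤ 2/3`,
while `‖x j + x k‖ ≤ 2/3` gives `f (x j) + f (x k) ≥ -2/3`; hence `f (x j) = -1/3` exactly.
Therefore the four norming functionals take only the values `±1` on the three vectors
`(3/2) • (x 0 + x j)`, `j ≠ 0`, and together with their negatives they realize all eight sign
patterns. As these three vectors lie in the unit ball, they span an isometric copy of `ℓ¹`.
-/

section SignPatterns

theorem exists_intUnits_mul_eq_abs {R : Type*} [Ring R] [LinearOrder R] (a : R) :
    ∃ ε : ℤˣ, a * (ε : ℤ) = |a| := by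
  rcases abs_choice a with h | h
  · exact ⟨1, by simp [h]⟩
  · exact ⟨-1, by simp [h]⟩

variable {ι X : Type*} [Fintype ι] [NormedAddCommGroup X] [NormedSpace ℝ X]

theorem norm_sum_smul_le_sum_abs {u : ι → X} (hu : ∀ i, ‖u i‖ ≤ 1) (a : ι → ℝ) :
    ‖∑ i, a i • u i‖ ≤ ∑ i, |a i| := by
  refine norm_sum_le_of_le _ fun i _ ↦ ?_
  rw [norm_smul, Real.norm_eq_abs]
  exact mul_le_of_le_one_right (abs_nonneg _) (hu i)

theorem sum_abs_le_norm_sum_smul_of_forall_sign {u : ι → X}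
    (hsign : ∀ ε : ι → ℤˣ, ∃ f : StrongDual ℝ X, ‖f‖ ≤ 1 ∧ ∀ i, f (u i) = (ε i : ℤ))
    (a : ι → ℝ) : ∑ i, |a i| ≤ ‖∑ i, a i • u i‖ := by
  choose ε hε using fun i ↦ exists_intUnits_mul_eq_abs (a i)
  obtain ⟨f, hf, hfu⟩ := hsign ε
  calc ∑ i, |a i| = f (∑ i, a i • u i) := by simp [hfu, hε]
    _ ≤ ‖f (∑ i, a i • u i)‖ := Real.le_norm_self _
    _ ≤ ‖∑ i, a i • u i‖ := by simpa using f.le_of_opNorm_le hf (∑ i, a i • u i)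

theorem nonempty_linearIsometry_ell1_of_forall_sign {u : ι → X} (hu : ∀ i, ‖u i‖ ≤ 1)
    (hsign : ∀ ε : ι → ℤˣ, ∃ f : StrongDual ℝ X, ‖f‖ ≤ 1 ∧ ∀ i, f (u i) = (ε i : ℤ)) :
    Nonempty (PiLp 1 (fun _ : ι ↦ ℝ) →ₗᵢ[ℝ] X) := by
  refine ⟨⟨Fintype.linearCombination ℝ u ∘ₗ (WithLp.linearEquiv 1 ℝ (ι → ℝ)).toLinearMap,
    fun a ↦ ?_⟩⟩
  have hnorm : ‖∑ i, a i • u i‖ = ∑ i, |a i| :=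
    (norm_sum_smul_le_sum_abs hu _).antisymm (sum_abs_le_norm_sum_smul_of_forall_sign hsign _)
  simpa [Fintype.linearCombination_apply, PiLp.norm_eq_of_L1] using hnorm

theorem exists_linearEquiv_sum_abs_eq_norm [FiniteDimensional ℝ X]
    (hdim : Module.finrank ℝ X = Fintype.card ι) (J : PiLp 1 (fun _ : ι ↦ ℝ) →ₗᵢ[ℝ] X) :
    ∃ T : X ≃ₗ[ℝ] (ι → ℝ), ∀ v, ∑ i, |T v i| = ‖v‖ := by
  let e : PiLp 1 (fun _ : ι ↦ ℝ) ≃ₗᵢ[ℝ] X := J.toLinearIsometryEquiv <| by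
    rw [(WithLp.linearEquiv 1 ℝ (ι → ℝ)).finrank_eq, Module.finrank_fintype_fun_eq_card, hdim]
  refine ⟨e.symm.toLinearEquiv ≪≫ₗ WithLp.linearEquiv 1 ℝ (ι → ℝ), fun v ↦ ?_⟩
  rw [← e.symm.norm_map v, PiLp.norm_eq_of_L1]
  simp

end SignPatterns

section TwoThirdsAdditive

variable {X : Type*} [NormedAddCommGroup X] [NormedSpace ℝ X]

theorem dual_apply_eq_neg_one_third {f : StrongDual ℝ X} (hf : ‖f‖ ≤ 1) {u v w : X} (hu : f u = 1)
    (huv : ‖u + v‖ ≤ 2 / 3) (huw : ‖u + w‖ ≤ 2 / 3) (hvw : ‖v + w‖ ≤ 2 / 3) :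
    f v = -1 / 3 := by
  have abs_add_le {y z : X} (h : ‖y + z‖ ≤ 2 / 3) : |f y + f z| ≤ 2 / 3 := by
    simpa using (f.le_of_opNorm_le hf (y + z)).trans (by simpa using h)
  have hv : f v ≤ -1 / 3 := by linarith [le_of_abs_le (abs_add_le huv)]
  have hw : f w ≤ -1 / 3 := by linarith [le_of_abs_le (abs_add_le huw)]
  linarith [neg_le_of_abs_le (abs_add_le hvw)]

theorem exists_dual_apply_eq_one_and_eq_neg_one_third {ι : Type*} (hι : 3 ≤ ENat.card ι)
    {x : ι → X} (hsum : ∀ i j, i ≠ j → ‖x i + x j‖ ≤ 2 / 3) {i : ι} (hi : ‖x i‖ = 1) :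
    ∃ f : StrongDual ℝ X, ‖f‖ ≤ 1 ∧ f (x i) = 1 ∧ ∀ j, i ≠ j → f (x j) = -1 / 3 := by
  obtain ⟨f, hf, hfx⟩ := exists_dual_vector'' ℝ (x i)
  have hfi : f (x i) = 1 := by simpa [hi] using hfx
  refine ⟨f, hf, hfi, fun j hij ↦ ?_⟩
  obtain ⟨k, hki, hkj⟩ := ENat.exists_ne_ne_of_three_le hι i j
  exact dual_apply_eq_neg_one_third hf hfi (hsum i j hij) (hsum i k hki.symm) (hsum j k hkj.symm)

-- Up to a global sign, three signs are either `+++` (`i = 0`) or have a single `+` (`i = j.succ`).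
theorem exists_sign_eq_mul_ite (ε : Fin 3 → ℤˣ) :
    ∃ (δ : ℤˣ) (i : Fin 4), ∀ j : Fin 3, ε j = δ * if i = 0 ∨ i = j.succ then 1 else -1 := by
  decide +revert

theorem exists_dual_apply_eq_sign {x : Fin 4 → X} (hunit : ∀ i, ‖x i‖ = 1)
    (hsum : ∀ i j, i ≠ j → ‖x i + x j‖ ≤ 2 / 3) (ε : Fin 3 → ℤˣ) :
    ∃ f : StrongDual ℝ X, ‖f‖ ≤ 1 ∧
      ∀ j : Fin 3, f ((3 / 2 : ℝ) • (x 0 + x j.succ)) = (ε j : ℤ) := by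
  obtain ⟨δ, i, hε⟩ := exists_sign_eq_mul_ite ε
  obtain ⟨f, hf, hfi, hfne⟩ :=
    exists_dual_apply_eq_one_and_eq_neg_one_third (by norm_num) hsum (hunit i)
  have hfu (j : Fin 3) : f ((3 / 2 : ℝ) • (x 0 + x j.succ)) =
      if i = 0 ∨ i = j.succ then 1 else -1 := by
    have hj : (0 : Fin 4) ≠ j.succ := (Fin.succ_ne_zero j).symm
    rw [map_smul, map_add, smul_eq_mul]
    split_ifs with h
    · rcases h with rfl | rfl
      · rw [hfi, hfne _ hj]; norm_num
      · rw [hfi, hfne _ hj.symm]; norm_num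
    · rw [not_or] at h
      rw [hfne _ h.1, hfne _ h.2]; norm_num
  refine ⟨((δ : ℤ) : ℝ) • f, ?_, fun j ↦ ?_⟩
  · rcases Int.units_eq_one_or δ with rfl | rfl <;> simpa [norm_smul] using hf
  · rw [smul_apply, hfu, hε, smul_eq_mul]
    split_ifs <;> simp

theorem four_two_thirds_additive_implies_ell1_general {x : Fin 4 → X} (hunit : ∀ i, ‖x i‖ = 1)
    (hsum : ∀ i j, i ≠ j → ‖x i + x j‖ ≤ 2 / 3) :
    Nonempty (PiLp 1 (fun _ : Fin 3 ↦ ℝ) →ₗᵢ[ℝ] X) := by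
  refine nonempty_linearIsometry_ell1_of_forall_sign (fun j ↦ ?_)
    (exists_dual_apply_eq_sign hunit hsum)
  rw [norm_smul, Real.norm_of_nonneg (by norm_num)]
  linarith [hsum 0 j.succ (Fin.succ_ne_zero j).symm]

end TwoThirdsAdditive

theorem four_two_thirds_additive_implies_ell1
    (X : Type*) [NormedAddCommGroup X] [NormedSpace ℝ X]
    (hdim : Module.finrank ℝ X = 3)
    (x : Fin 4 → X) (hx : Function.Injective x)
    (hunit : ∀ i, ‖x i‖ = 1)
    (hsum : ∀ i j, i ≠ j → ‖x i + x j‖ ≤ 2 / 3) :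
    ∃ T : X ≃ₗ[ℝ] (Fin 3 → ℝ),
      ∀ v : X, |T v 0| + |T v 1| + |T v 2| = ‖v‖ := by
  have : FiniteDimensional ℝ X := .of_finrank_eq_succ hdim
  obtain ⟨J⟩ := four_two_thirds_additive_implies_ell1_general hunit hsum
  simpa only [Fin.sum_univ_three] using exists_linearEquiv_sum_abs_eq_norm (by simpa using hdim) J
end

section
/- Let x₁,…,x_m be nonzero vectors in ℝ^d and let 0 < δ ≤ 2. Suppose there exist vectors y₁,…,y_m ∈ ℝ^d such that (with ⟨·,·⟩ the standard inner product on ℝ^d): ⟨x_i, y_i⟩ = 1 for all i; −1 ≤ ⟨x_j, y_i⟩ ≤ δ − 1 for all distinct i, j; and −δ ≤ ⟨x_j + x_k, y_i⟩ for all i, j, k with j ≠ k. Then there exists a norm N on ℝ^d (a function N : ℝ^d → ℝ satisfying N(x) = 0 iff x = 0, N(cx) = |c|·N(x), and N(x+y) ≤ N(x)+N(y)) such that N(x_i) = 1 for all i and N(x_i + x_j) ≤ δ for all 1 ≤ i < j ≤ m. -/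
/-!
The maximum of the seminorms `|f i ·|`, with `f i = ⟨·, y i⟩`, is `1` at each `x i` and at most `δ`
at each `x j + x k` with `j ≠ k`, but it vanishes on the common kernel of the `f i`. Taking its
maximum with a small multiple of a norm makes it definite, and does not disturb the upper bounds
`1` and `δ` at these finitely many vectors because both bounds are positive.
-/

open Bornology Set
open scoped NNReal Pointwise

section Entries

variable {ι : Type*} {a : ι → ι → ℝ} {δ : ℝ}

lemma abs_entry_le_one (hδ2 : δ ≤ 2) (hdiag : ∀ i, a i i = 1)
    (hoff : ∀ i j, i ≠ j → -1 ≤ a i j ∧ a i j ≤ δ - 1) (i j : ι) : |a i j| ≤ 1 := by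
  rcases eq_or_ne i j with rfl | hij
  · rw [hdiag, abs_one]
  · obtain ⟨hlower, hupper⟩ := hoff i j hij
    exact abs_le.2 ⟨hlower, by linarith⟩

lemma entry_add_entry_le (hle : ∀ i j, a i j ≤ 1) (hoff : ∀ i j, i ≠ j → a i j ≤ δ - 1)
    (i : ι) {j k : ι} (hjk : j ≠ k) : a i j + a i k ≤ δ := by
  rcases eq_or_ne i j with rfl | hij
  · linarith [hle i i, hoff i k hjk]
  · linarith [hoff i j hij, hle i k]

end Entries

section Seminorms

variable {E : Type*} [NormedAddCommGroup E] [NormedSpace ℝ E]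

lemma exists_definite_seminorm_ge (p : Seminorm ℝ E) {S : Set E} (hS : IsBounded S) {c : ℝ}
    (hc : 0 < c) :
    ∃ N : Seminorm ℝ E, (∀ v, N v = 0 ↔ v = 0) ∧ p ≤ N ∧ ∀ v ∈ S, N v ≤ max (p v) c := by
  obtain ⟨R, hR, hSR⟩ := hS.exists_pos_norm_le
  obtain ⟨ε, hε⟩ : ∃ ε : ℝ≥0, (ε : ℝ) = c / R := CanLift.prf (c / R) (by positivity)
  have hε_pos : (0 : ℝ) < ε := hε ▸ div_pos hc hR
  have hN (v : E) : (p ⊔ ε • normSeminorm ℝ E) v = max (p v) (ε * ‖v‖) := rfl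
  refine ⟨p ⊔ ε • normSeminorm ℝ E, fun v ↦ ⟨fun hv ↦ ?_, ?_⟩, le_sup_left, fun v hv ↦ ?_⟩
  · have hle : ε * ‖v‖ ≤ 0 := hv ▸ hN v ▸ le_max_right _ _
    exact norm_le_zero_iff.1 (nonpos_of_mul_nonpos_right hle hε_pos)
  · rintro rfl
    exact map_zero _
  · rw [hN]
    refine max_le_max le_rfl ?_
    calc ε * ‖v‖ ≤ ε * R := by gcongr; exact hSR v hv
      _ = c := by rw [hε, div_mul_cancel₀ c hR.ne']

theorem norm_exists_backward_general {ι : Type*} [Finite ι] {δ : ℝ} (hδ0 : 0 < δ) (hδ2 : δ ≤ 2)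
    (x : ι → E) (f : ι → E →ₗ[ℝ] ℝ) (hself : ∀ i, f i (x i) = 1)
    (hoff : ∀ i j, i ≠ j → -1 ≤ f i (x j) ∧ f i (x j) ≤ δ - 1)
    (hadd : ∀ i j k, j ≠ k → -δ ≤ f i (x j + x k)) :
    ∃ N : Seminorm ℝ E, (∀ v, N v = 0 ↔ v = 0) ∧ (∀ i, N (x i) = 1) ∧
      ∀ i j, i ≠ j → N (x i + x j) ≤ δ := by
  cases nonempty_fintype ι
  let p : Seminorm ℝ E := Finset.univ.sup fun i ↦ (f i).toSeminorm
  have habs : ∀ i j, |f i (x j)| ≤ 1 := abs_entry_le_one hδ2 hself hoff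
  have hp_one (j : ι) : p (x j) ≤ 1 :=
    Seminorm.finset_sup_apply_le zero_le_one fun i _ ↦ habs i j
  have hp_add (j k : ι) (hjk : j ≠ k) : p (x j + x k) ≤ δ := by
    refine Seminorm.finset_sup_apply_le hδ0.le fun i _ ↦ abs_le.2 ⟨hadd i j k hjk, ?_⟩
    rw [map_add]
    exact entry_add_entry_le (a := fun i j ↦ f i (x j)) (fun i j ↦ (abs_le.1 (habs i j)).2)
      (fun i j hij ↦ (hoff i j hij).2) i hjk
  have hbounded : IsBounded (range x ∪ (range x + range x)) :=
    ((finite_range x).union ((finite_range x).add (finite_range x))).isBounded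
  obtain ⟨N, hN_zero, hpN, hN_le⟩ :=
    exists_definite_seminorm_ge p hbounded (lt_min one_pos hδ0)
  refine ⟨N, hN_zero, fun i ↦ le_antisymm ?_ ?_, fun j k hjk ↦ ?_⟩
  · exact (hN_le _ (.inl ⟨i, rfl⟩)).trans (max_le (hp_one i) (min_le_left _ _))
  · calc 1 = (f i).toSeminorm (x i) := by rw [LinearMap.toSeminorm_apply, hself, norm_one]
      _ ≤ p (x i) :=
        Seminorm.le_finset_sup_apply (p := fun i ↦ (f i).toSeminorm) (Finset.mem_univ i)
      _ ≤ N (x i) := hpN _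
  · exact (hN_le _ (.inr (add_mem_add ⟨j, rfl⟩ ⟨k, rfl⟩))).trans
      (max_le (hp_add j k hjk) (min_le_right _ _))

end Seminorms

theorem norm_exists_backward
    (d m : ℕ) (x : Fin m → (Fin d → ℝ)) (hx : ∀ i, x i ≠ 0)
    (δ : ℝ) (hδ0 : 0 < δ) (hδ2 : δ ≤ 2)
    (y : Fin m → (Fin d → ℝ))
    (hy1 : ∀ i, ∑ k, x i k * y i k = 1)
    (hy2 : ∀ i j, i ≠ j → -1 ≤ ∑ k, x j k * y i k ∧ ∑ k, x j k * y i k ≤ δ - 1)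
    (hy3 : ∀ i j k : Fin m, j ≠ k → -δ ≤ ∑ l, (x j l + x k l) * y i l) :
    ∃ N : (Fin d → ℝ) → ℝ,
      (∀ v, N v = 0 ↔ v = 0) ∧
      (∀ (c : ℝ) (v), N (c • v) = |c| * N v) ∧
      (∀ v w, N (v + w) ≤ N v + N w) ∧
      (∀ i, N (x i) = 1) ∧
      (∀ i j : Fin m, i < j → N (x i + x j) ≤ δ) := by
  obtain ⟨N, hzero, hone, hadd⟩ := norm_exists_backward_general hδ0 hδ2 x
    (fun i ↦ Fintype.linearCombination ℝ (y i)) hy1 hy2 hy3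
  exact ⟨N, hzero, map_smul_eq_mul N, map_add_le_add N, hone, fun i j hij ↦ hadd i j hij.ne⟩
end

section
/- Let m ≥ 3 and let x₁,…,x_m and y₁,…,y_m be vectors in ℝ^d (with ⟨·,·⟩ the standard inner product) satisfying: ⟨x_i, y_i⟩ = 1 for all i; ⟨x_j, y_i⟩ ≤ −1/3 for all distinct i, j; and ⟨x_j + x_k, y_i⟩ ≥ −2/3 for all i, j, k with j ≠ k. Then ⟨x_j, y_i⟩ = −1/3 for all distinct i, j. Moreover, if scalars λ₁,…,λ_m satisfy Σ_i λ_i x_i = 0, then all the λ_i are equal; and if in addition m ≠ 4, then λ_i = 0 for all i, i.e., x₁,…,x_m are linearly independent. -/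
/-!
Fix `i` and distinct `j, k ≠ i`. The values `⟨x j, y i⟩` and `⟨x k, y i⟩` are at most `-1/3`, yet
their sum is at least `-2/3`, so both equal `-1/3`; `m ≥ 3` guarantees that such a `k` exists.
Pairing a relation `∑ j, lam j • x j = 0` with `y i` therefore gives
`(4/3) lam i = (1/3) ∑ j, lam j` for every `i`. So the coefficients all equal some `t` with
`(4 - m) t = 0`.
-/

theorem eq_of_forall_ne_le_of_add_self_le_add {ι M : Type*} [AddCommMonoid M] [PartialOrder M]
    [IsOrderedCancelAddMonoid M] (hι : 3 ≤ Cardinal.mk ι) {g : ι → M} {b : M} {i j : ι}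
    (hle : ∀ k, k ≠ i → g k ≤ b) (hadd : ∀ k, j ≠ k → b + b ≤ g j + g k) (hj : j ≠ i) :
    g j = b := by
  obtain ⟨k, hki, hkj⟩ := Cardinal.exists_ne_ne_of_three_le hι i j
  refine (hle j hj).antisymm (le_of_add_le_add_right (a := b) ?_)
  calc b + b ≤ g j + g k := hadd k hkj.symm
    _ ≤ g j + b := by gcongr; exact hle k hki

section ConstantOffDiagonalPairing

variable {ι R V : Type*} [Fintype ι] [CommRing R] [AddCommGroup V] [Module R V]
  {x : ι → V} {f : ι → Module.Dual R V} {a b : R} {c : ι → R}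

theorem dual_apply_sum_smul_of_forall_ne {φ : Module.Dual R V} {i : ι} (hdiag : φ (x i) = a)
    (hoff : ∀ j, j ≠ i → φ (x j) = b) :
    φ (∑ j, c j • x j) = (a - b) * c i + b * ∑ j, c j := by
  classical
  have hφ (j : ι) : φ (x j) = b + if j = i then a - b else 0 := by
    split_ifs with hji
    · rw [hji, hdiag, add_sub_cancel]
    · rw [hoff j hji, add_zero]
  simp only [map_sum, map_smul, smul_eq_mul, hφ, mul_add, mul_ite, mul_zero,
    Finset.sum_add_distrib, Finset.sum_ite_eq', Finset.mem_univ, if_true, ← Finset.sum_mul]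
  ring

theorem coeff_eq_coeff_of_sum_smul_eq_zero [NoZeroDivisors R] (hdiag : ∀ i, f i (x i) = a)
    (hoff : ∀ i j, j ≠ i → f i (x j) = b) (hab : a ≠ b) (hc : ∑ j, c j • x j = 0) (i j : ι) :
    c i = c j := by
  have hrel (k : ι) : (a - b) * c k + b * ∑ l, c l = 0 := by
    rw [← dual_apply_sum_smul_of_forall_ne (hdiag k) (hoff k), hc, map_zero]
  exact mul_left_cancel₀ (sub_ne_zero.mpr hab) (add_right_cancel ((hrel i).trans (hrel j).symm))

theorem linearIndependent_of_dual_apply_eq_of_forall_ne [NoZeroDivisors R]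
    (hdiag : ∀ i, f i (x i) = a) (hoff : ∀ i j, j ≠ i → f i (x j) = b) (hab : a ≠ b)
    (hrow : a + (Fintype.card ι - 1) * b ≠ 0) : LinearIndependent R x := by
  rw [Fintype.linearIndependent_iff]
  intro c hc i
  have hsum : ∑ j, c j = Fintype.card ι * c i := by
    simp [coeff_eq_coeff_of_sum_smul_eq_zero hdiag hoff hab hc _ i]
  refine (mul_eq_zero.mp ?_).resolve_left hrow
  calc (a + (Fintype.card ι - 1) * b) * c i = (a - b) * c i + b * ∑ j, c j := by rw [hsum]; ring
    _ = f i (∑ j, c j • x j) := (dual_apply_sum_smul_of_forall_ne (hdiag i) (hoff i)).symm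
    _ = 0 := by rw [hc, map_zero]

end ConstantOffDiagonalPairing

theorem dual_vectors_rigidity_general {ι K V : Type*} [Fintype ι] [Field K] [LinearOrder K]
    [IsStrictOrderedRing K] [AddCommGroup V] [Module K V] (hι : 3 ≤ Fintype.card ι)
    (x : ι → V) (f : ι → Module.Dual K V)
    (hdiag : ∀ i, f i (x i) = 1)
    (hle : ∀ i j, i ≠ j → f i (x j) ≤ -(1 / 3))
    (hadd : ∀ i j k, j ≠ k → -(2 / 3) ≤ f i (x j + x k)) :
    (∀ i j, i ≠ j → f i (x j) = -(1 / 3)) ∧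
    (∀ c : ι → K, ∑ i, c i • x i = 0 → ∀ i j, c i = c j) ∧
    (Fintype.card ι ≠ 4 → LinearIndependent K x) := by
  have hcard : 3 ≤ Cardinal.mk ι := by rw [Cardinal.mk_fintype]; exact_mod_cast hι
  have hoff (i j : ι) (hji : j ≠ i) : f i (x j) = -(1 / 3) := by
    refine eq_of_forall_ne_le_of_add_self_le_add (g := fun k ↦ f i (x k)) hcard
      (fun k hki ↦ hle i k hki.symm) (fun k hjk ↦ ?_) hji
    have := hadd i j k hjk
    rw [map_add] at this
    linarith
  have hne : (1 : K) ≠ -(1 / 3) := by norm_num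
  refine ⟨fun i j hij ↦ hoff i j hij.symm,
    fun c hc ↦ coeff_eq_coeff_of_sum_smul_eq_zero hdiag hoff hne hc,
    fun h4 ↦ linearIndependent_of_dual_apply_eq_of_forall_ne hdiag hoff hne fun hrow ↦ h4 ?_⟩
  have : (Fintype.card ι : K) = 4 := by linarith
  exact_mod_cast this

theorem dual_vectors_rigidity
    (d m : ℕ) (hm : 3 ≤ m)
    (x y : Fin m → (Fin d → ℝ))
    (h1 : ∀ i, ∑ k, x i k * y i k = 1)
    (h2 : ∀ i j, i ≠ j → ∑ k, x j k * y i k ≤ -(1 / 3))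
    (h3 : ∀ i j k : Fin m, j ≠ k → -(2 / 3) ≤ ∑ l, (x j l + x k l) * y i l) :
    (∀ i j, i ≠ j → ∑ k, x j k * y i k = -(1 / 3)) ∧
    (∀ lam : Fin m → ℝ, ∑ i, lam i • x i = 0 → ∀ i j, lam i = lam j) ∧
    (m ≠ 4 → LinearIndependent ℝ x) := by
  simpa only [Fintype.card_fin] using! dual_vectors_rigidity_general
    (by rwa [Fintype.card_fin]) x (fun i ↦ (dotProductBilin ℝ ℝ).flip (y i)) h1 h2 h3
end

section
/- Let X be a 3-dimensional real normed space and let x₁, x₂, x₃, x₄ be four distinct unit vectors in X with ‖x_i + x_j‖ ≤ 2/3 for all i ≠ j. Then ‖x_i + x_j‖ = 2/3 for all i ≠ j, x₁ + x₂ + x₃ + x₄ = 0, and the three vectors z_i = (3/2)(x_i + x₄), i = 1, 2, 3, are linearly independent unit vectors. -/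
/-!
Let `f i` be a norm-one functional with `f i (x i) = 1`. For `i`, `j`, `k` distinct,
`‖x i + x j‖ ≤ 2 / 3` and `‖x i + x k‖ ≤ 2 / 3` force `f i (x j)` and `f i (x k)` to be at most
`-1 / 3`, while `‖x j + x k‖ ≤ 2 / 3` forces their sum to be at least `-2 / 3`. Hence
`f i (x j) = -1 / 3` for all `j ≠ i`, and every bound `‖x j + x k‖ ≤ 2 / 3` is attained.
Applying `f i` to a relation `∑ j, l j • x j = 0` gives `4 * l i = ∑ j, l j`, so all coefficients
agree, and a linearly dependent family sums to zero. Finally, the functionals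
`(1 / 2) • (f i + f k)` are biorthogonal to the vectors `(3 / 2) • (x i + x k)`, `i ≠ k`.
-/

section ThreeVectors

variable {X : Type*} [NormedAddCommGroup X] [NormedSpace ℝ X] {a b c : X}

theorem dual_apply_eq_neg_one_third_s11 {f : StrongDual ℝ X} (hf : ‖f‖ ≤ 1) (hfa : f a = 1)
    (hab : ‖a + b‖ ≤ 2 / 3) (hac : ‖a + c‖ ≤ 2 / 3) (hbc : ‖b + c‖ ≤ 2 / 3) :
    f b = -1 / 3 := by
  have hf_add {u v : X} (huv : ‖u + v‖ ≤ 2 / 3) : |f u + f v| ≤ 2 / 3 :=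
    calc |f u + f v| = ‖f (u + v)‖ := by rw [map_add, Real.norm_eq_abs]
      _ ≤ 1 * ‖u + v‖ := f.le_of_opNorm_le hf _
      _ ≤ 2 / 3 := by rwa [one_mul]
  have hb : f b ≤ -1 / 3 := by linarith [(abs_le.1 (hf_add hab)).2]
  have hc : f c ≤ -1 / 3 := by linarith [(abs_le.1 (hf_add hac)).2]
  have hbc' : -(2 / 3) ≤ f b + f c := (abs_le.1 (hf_add hbc)).1
  linarith

theorem exists_dual_norm_eq_one_apply_eq_one (ha : ‖a‖ = 1) :
    ∃ f : StrongDual ℝ X, ‖f‖ = 1 ∧ f a = 1 := by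
  obtain ⟨f, hf, hfa⟩ := exists_dual_vector ℝ a (by simp [ha])
  exact ⟨f, hf, by simp [hfa, ha]⟩

theorem norm_add_eq_two_thirds (ha : ‖a‖ = 1)
    (hab : ‖a + b‖ ≤ 2 / 3) (hac : ‖a + c‖ ≤ 2 / 3) (hbc : ‖b + c‖ ≤ 2 / 3) :
    ‖b + c‖ = 2 / 3 := by
  obtain ⟨f, hf, hfa⟩ := exists_dual_norm_eq_one_apply_eq_one ha
  have hfb : f b = -1 / 3 := dual_apply_eq_neg_one_third_s11 hf.le hfa hab hac hbc
  have hfc : f c = -1 / 3 := dual_apply_eq_neg_one_third_s11 hf.le hfa hac hab (add_comm b c ▸ hbc)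
  refine le_antisymm hbc ?_
  calc (2 / 3 : ℝ) = ‖f (b + c)‖ := by rw [map_add, hfb, hfc]; norm_num
    _ ≤ 1 * ‖b + c‖ := f.le_of_opNorm_le hf.le _
    _ = ‖b + c‖ := one_mul _

end ThreeVectors

/-- A family of unit vectors whose pairwise sums have norm at most `2 / 3`. For at least three
vectors no smaller constant is possible. -/
structure IsTwoThirdsFamily {ι X : Type*} [NormedAddCommGroup X] (x : ι → X) : Prop where
  norm_eq_one : ∀ i, ‖x i‖ = 1
  norm_add_le : ∀ i j, i ≠ j → ‖x i + x j‖ ≤ 2 / 3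

namespace IsTwoThirdsFamily

open Cardinal

variable {ι X : Type*} [NormedAddCommGroup X] [NormedSpace ℝ X] {x : ι → X}

theorem norm_add_eq (hx : IsTwoThirdsFamily x) (hι : 3 ≤ #ι) {i j : ι} (hij : i ≠ j) :
    ‖x i + x j‖ = 2 / 3 := by
  obtain ⟨k, hki, hkj⟩ := exists_ne_ne_of_three_le hι i j
  exact norm_add_eq_two_thirds (hx.norm_eq_one k) (hx.norm_add_le k i hki)
    (hx.norm_add_le k j hkj) (hx.norm_add_le i j hij)

theorem exists_dual_apply_eq (hx : IsTwoThirdsFamily x) (hι : 3 ≤ #ι) :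
    ∃ f : ι → StrongDual ℝ X,
      (∀ i, f i (x i) = 1) ∧ ∀ i j, i ≠ j → f i (x j) = -1 / 3 := by
  choose f hf hfx using fun i ↦ exists_dual_norm_eq_one_apply_eq_one (hx.norm_eq_one i)
  refine ⟨f, hfx, fun i j hij ↦ ?_⟩
  obtain ⟨k, hki, hkj⟩ := exists_ne_ne_of_three_le hι i j
  exact dual_apply_eq_neg_one_third_s11 (hf i).le (hfx i) (hx.norm_add_le i j hij)
    (hx.norm_add_le i k hki.symm) (hx.norm_add_le j k hkj.symm)

theorem four_mul_eq_sum_of_sum_smul_eq_zero [Fintype ι] (hx : IsTwoThirdsFamily x)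
    (hι : 3 ≤ #ι) {l : ι → ℝ} (hl : ∑ j, l j • x j = 0) (i : ι) :
    4 * l i = ∑ j, l j := by
  classical
  obtain ⟨f, hf_self, hf_ne⟩ := hx.exists_dual_apply_eq hι
  have hrel : ∑ j, l j * f i (x j) = 0 := by
    simpa only [map_sum, map_smul, smul_eq_mul, map_zero] using congrArg (f i) hl
  have hrest : ∑ j ∈ Finset.univ.erase i, l j * f i (x j) =
      (∑ j ∈ Finset.univ.erase i, l j) * (-1 / 3) := by
    rw [Finset.sum_mul]
    exact Finset.sum_congr rfl fun j hj ↦ by rw [hf_ne i j (Finset.ne_of_mem_erase hj).symm]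
  rw [← Finset.add_sum_erase _ _ (Finset.mem_univ i), hf_self, hrest] at hrel
  rw [← Finset.add_sum_erase _ _ (Finset.mem_univ i)]
  linarith

theorem sum_eq_zero_of_not_linearIndependent [Fintype ι] (hx : IsTwoThirdsFamily x)
    (hι : 3 ≤ #ι) (hdep : ¬LinearIndependent ℝ x) : ∑ i, x i = 0 := by
  obtain ⟨l, hl, i, hi⟩ := Fintype.not_linearIndependent_iff.1 hdep
  have hconst (j : ι) : l j = l i := by
    linarith [hx.four_mul_eq_sum_of_sum_smul_eq_zero hι hl i,
      hx.four_mul_eq_sum_of_sum_smul_eq_zero hι hl j]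
  simp only [hconst, ← Finset.smul_sum] at hl
  exact (smul_eq_zero.1 hl).resolve_left hi

theorem norm_smul_add_eq_one (hx : IsTwoThirdsFamily x) (hι : 3 ≤ #ι) {i k : ι} (hik : i ≠ k) :
    ‖(3 / 2 : ℝ) • (x i + x k)‖ = 1 := by
  rw [norm_smul, hx.norm_add_eq hι hik]
  norm_num

theorem linearIndependent_smul_add (hx : IsTwoThirdsFamily x) (hι : 3 ≤ #ι) (k : ι) :
    LinearIndependent ℝ fun i : {i // i ≠ k} ↦ (3 / 2 : ℝ) • (x i + x k) := by
  obtain ⟨f, hf_self, hf_ne⟩ := hx.exists_dual_apply_eq hι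
  refine .of_pairwise_dual_eq_zero_one _
    (fun i ↦ ((1 / 2 : ℝ) • (f i + f k) : StrongDual ℝ X).toLinearMap) (fun i j hij ↦ ?_)
    fun i ↦ ?_
  · have hij' : (i : ι) ≠ j := Subtype.coe_ne_coe.2 hij
    norm_num [hf_self, hf_ne _ _ hij', hf_ne _ _ i.2, hf_ne _ _ j.2.symm]
  · norm_num [hf_self, hf_ne _ _ i.2, hf_ne _ _ i.2.symm]

end IsTwoThirdsFamily

theorem four_two_thirds_additive_structure
    (X : Type*) [NormedAddCommGroup X] [NormedSpace ℝ X]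
    (hdim : Module.finrank ℝ X = 3)
    (x : Fin 4 → X) (hx : Function.Injective x)
    (hunit : ∀ i, ‖x i‖ = 1)
    (hsum : ∀ i j, i ≠ j → ‖x i + x j‖ ≤ 2 / 3) :
    (∀ i j, i ≠ j → ‖x i + x j‖ = 2 / 3) ∧
    (x 0 + x 1 + x 2 + x 3 = 0) ∧
    (∀ z : Fin 3 → X,
      (∀ i : Fin 3, z i = (3 / 2 : ℝ) • (x i.castSucc + x 3)) →
      (∀ i, ‖z i‖ = 1) ∧ LinearIndependent ℝ z) := by
  have hfam : IsTwoThirdsFamily x := ⟨hunit, hsum⟩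
  have hcard : 3 ≤ Cardinal.mk (Fin 4) := by norm_num [Cardinal.mk_fin]
  have hdep : ¬LinearIndependent ℝ x := fun hli ↦ by
    have : FiniteDimensional ℝ X := Module.finite_of_finrank_eq_succ hdim
    simpa [hdim] using hli.fintype_card_le_finrank
  have hne (i : Fin 3) : i.castSucc ≠ 3 := i.castSucc_ne_last
  refine ⟨fun i j hij ↦ hfam.norm_add_eq hcard hij, ?_, fun z hz ↦ ?_⟩
  · rw [← Fin.sum_univ_four]
    exact hfam.sum_eq_zero_of_not_linearIndependent hcard hdep
  · obtain rfl : z = fun i ↦ (3 / 2 : ℝ) • (x i.castSucc + x 3) := funext hz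
    refine ⟨fun i ↦ hfam.norm_smul_add_eq_one hcard (hne i), ?_⟩
    exact (hfam.linearIndependent_smul_add hcard 3).comp (fun i : Fin 3 ↦ ⟨i.castSucc, hne i⟩)
      fun i j hij ↦ Fin.castSucc_injective 3 (congrArg Subtype.val hij)
end

section
/- Let V be a real inner product space and let v₁,…,v_m ∈ V be distinct vectors satisfying ‖v_i‖ ≥ 1 for all i and ‖v_i + v_j‖² ≤ 4/3 for all i ≠ j. Then ⟨v_i, v_j⟩ ≤ −1/3 for all i ≠ j, and consequently m ≤ 4. -/
open scoped RealInnerProductSpace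

/-!
Summing `‖v i + v j‖ ^ 2` over all ordered pairs `i ≠ j` of an `m`-element family gives
`2 * (m - 2) * ∑ i, ‖v i‖ ^ 2 + 2 * ‖∑ i, v i‖ ^ 2`. Dropping the last square and bounding the
other terms gives `2 * (m - 2) * m ≤ m * (m - 1) * (4 / 3)`, that is, `m ≤ 4`.
-/

section

variable {V : Type*} [NormedAddCommGroup V] [InnerProductSpace ℝ V]

lemma real_inner_le_of_norm_add_sq_le {x y : V} {a b c : ℝ} (hx : a ≤ ‖x‖ ^ 2)
    (hy : b ≤ ‖y‖ ^ 2) (hxy : ‖x + y‖ ^ 2 ≤ c) : ⟪x, y⟫ ≤ (c - a - b) / 2 := by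
  rw [norm_add_sq_real] at hxy
  linarith

variable {ι : Type*} (s : Finset ι) (v : ι → V)

lemma sum_product_norm_add_sq :
    ∑ p ∈ s ×ˢ s, ‖v p.1 + v p.2‖ ^ 2 =
      2 * s.card * ∑ i ∈ s, ‖v i‖ ^ 2 + 2 * ‖∑ i ∈ s, v i‖ ^ 2 := by
  have norm_sum_sq : ‖∑ i ∈ s, v i‖ ^ 2 = ∑ i ∈ s, ∑ j ∈ s, ⟪v i, v j⟫ := by
    rw [← real_inner_self_eq_norm_sq, sum_inner]
    simp only [inner_sum]
  rw [norm_sum_sq, Finset.sum_product]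
  simp only [norm_add_sq_real, Finset.sum_add_distrib, ← Finset.mul_sum, Finset.sum_const,
    nsmul_eq_mul]
  ring

lemma sum_offDiag_norm_add_sq :
    ∑ p ∈ s.offDiag, ‖v p.1 + v p.2‖ ^ 2 =
      2 * (s.card - 2) * ∑ i ∈ s, ‖v i‖ ^ 2 + 2 * ‖∑ i ∈ s, v i‖ ^ 2 := by
  classical
  have sum_diag : ∑ p ∈ s.diag, ‖v p.1 + v p.2‖ ^ 2 = 4 * ∑ i ∈ s, ‖v i‖ ^ 2 := by
    rw [Finset.sum_diag, Finset.mul_sum]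
    refine Finset.sum_congr rfl fun i _ ↦ ?_
    rw [← two_smul ℝ (v i), norm_smul, Real.norm_ofNat]
    ring
  have sum_product := sum_product_norm_add_sq s v
  rw [← Finset.diag_union_offDiag, Finset.sum_union s.disjoint_diag_offDiag, sum_diag]
    at sum_product
  linarith

variable {s v}

lemma two_mul_card_sub_two_mul_le_of_norm_add_sq_le {a c : ℝ} (hs : 2 ≤ s.card)
    (ha : ∀ i ∈ s, a ≤ ‖v i‖ ^ 2)
    (hc : (s : Set ι).Pairwise fun i j ↦ ‖v i + v j‖ ^ 2 ≤ c) :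
    2 * (s.card - 2) * a ≤ (s.card - 1) * c := by
  have two_le_card : (2 : ℝ) ≤ s.card := by exact_mod_cast hs
  have card_mul_le_sum : s.card * a ≤ ∑ i ∈ s, ‖v i‖ ^ 2 := by
    simpa only [nsmul_eq_mul] using s.card_nsmul_le_sum _ a ha
  have sum_offDiag_le :
      ∑ p ∈ s.offDiag, ‖v p.1 + v p.2‖ ^ 2 ≤ s.card * (s.card - 1) * c := by
    calc ∑ p ∈ s.offDiag, ‖v p.1 + v p.2‖ ^ 2
      _ ≤ s.offDiag.card • c := Finset.sum_le_card_nsmul _ _ c fun p hp ↦ by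
          obtain ⟨h₁, h₂, hne⟩ := Finset.mem_offDiag.mp hp
          exact hc h₁ h₂ hne
      _ = s.card * (s.card - 1) * c := by
          rw [nsmul_eq_mul, Finset.offDiag_card, Nat.cast_sub (Nat.le_mul_self _), Nat.cast_mul]
          ring
  refine le_of_mul_le_mul_left ?_ (show (0 : ℝ) < s.card by linarith)
  calc s.card * (2 * (s.card - 2) * a)
    _ = 2 * (s.card - 2) * (s.card * a) := by ring
    _ ≤ 2 * (s.card - 2) * ∑ i ∈ s, ‖v i‖ ^ 2 := by gcongr
    _ ≤ 2 * (s.card - 2) * ∑ i ∈ s, ‖v i‖ ^ 2 + 2 * ‖∑ i ∈ s, v i‖ ^ 2 :=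
        le_add_of_nonneg_right (by positivity)
    _ = ∑ p ∈ s.offDiag, ‖v p.1 + v p.2‖ ^ 2 := (sum_offDiag_norm_add_sq s v).symm
    _ ≤ s.card * (s.card - 1) * c := sum_offDiag_le
    _ = s.card * ((s.card - 1) * c) := by ring

end

theorem inner_product_space_bound
    (V : Type*) [NormedAddCommGroup V] [InnerProductSpace ℝ V]
    (m : ℕ) (v : Fin m → V) (hv : Function.Injective v)
    (hnorm : ∀ i, 1 ≤ ‖v i‖)
    (hsum : ∀ i j, i ≠ j → ‖v i + v j‖ ^ 2 ≤ 4 / 3) :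
    (∀ i j, i ≠ j → ⟪v i, v j⟫ ≤ -(1 / 3)) ∧ m ≤ 4 := by
  have one_le_norm_sq (i : Fin m) : 1 ≤ ‖v i‖ ^ 2 := one_le_pow₀ (hnorm i)
  constructor
  · intro i j hij
    linarith [real_inner_le_of_norm_add_sq_le (one_le_norm_sq i) (one_le_norm_sq j) (hsum i j hij)]
  · by_contra! hm
    have card_bound : 2 * ((m : ℝ) - 2) * 1 ≤ (m - 1) * (4 / 3) := by
      simpa only [Finset.card_fin] using
        two_mul_card_sub_two_mul_le_of_norm_add_sq_le (s := Finset.univ)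
          (by rw [Finset.card_fin]; lia) (fun i _ ↦ one_le_norm_sq i) fun i _ j _ ↦ hsum i j
    have four_lt : (4 : ℝ) < m := by exact_mod_cast hm
    linarith
end
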